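/- arXiv:0807.4074 — 2 statements merged into one kernel-verified Lean document; each statement's English description precedes it below -/
import Mathlib

section
/- For every integer n ≥ 2 there exists a rate-1/2 scaled complex orthogonal design of size [ν(n), n, ν(n)/2] with decoding delay ν(n): there exist complex ν(n)×n matrices A_0,…,A_{k−1}, B_0,…,B_{k−1}, where k = ν(n)/2, such that (a) every entry of every A_i and B_i lies in {0, 1, −1, 1/√2, −1/√2}; (b) for each matrix position (r,c), at most one entry among {A_i(r,c), B_i(r,c) : 0 ≤ i < k} is nonzero; and (c) for every x ∈ ℂ^k, setting G(x) = Σ_{i<k} (x_i A_i + conj(x_i) B_i), one has G(x)ᴴ G(x) = (Σ_{i<k} |x_i|²)·I_n. -/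
open Matrix

/-- `δ(n)`: `δ(8s+1)=4s`, `δ(8s+2)=4s+1`, `δ(8s+3)=δ(8s+4)=4s+2`,
`δ(8s+5)=δ(8s+6)=δ(8s+7)=δ(8s+8)=4s+3` (for `n ≥ 1`). -/
def delta (n : ℕ) : ℕ :=
  match (n - 1) % 8 with
  | 0 => 4 * ((n - 1) / 8)
  | 1 => 4 * ((n - 1) / 8) + 1
  | 2 => 4 * ((n - 1) / 8) + 2
  | 3 => 4 * ((n - 1) / 8) + 2
  | _ => 4 * ((n - 1) / 8) + 3

/-- `ν(n) = 2^{δ(n)}`. -/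
def nu (n : ℕ) : ℕ := 2 ^ delta n

open scoped Kronecker

/-- Signed partial permutation matrices. -/
def Mono {I : Type} (M : Matrix I I ℤ) : Prop :=
  (∀ i j, M i j = 0 ∨ M i j = 1 ∨ M i j = -1) ∧
  (∀ i j j', M i j ≠ 0 → M i j' ≠ 0 → j = j') ∧
  (∀ i i' j, M i j ≠ 0 → M i' j ≠ 0 → i = i')

lemma mono_of {I : Type} (M : Matrix I I ℤ)
    (h1 : ∀ i j, M i j = 0 ∨ M i j = 1 ∨ M i j = -1)
    (h2 : ∀ i j j', M i j = 0 ∨ M i j' = 0 ∨ j = j')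
    (h3 : ∀ i i' j, M i j = 0 ∨ M i' j = 0 ∨ i = i') : Mono M := by
  refine ⟨h1, fun i j j' a b => ?_, fun i i' j a b => ?_⟩
  · rcases h2 i j j' with h | h | h
    · exact absurd h a
    · exact absurd h b
    · exact h
  · rcases h3 i i' j with h | h | h
    · exact absurd h a
    · exact absurd h b
    · exact h

/-- Decision procedure for `Mono`. -/
def cellB {m : ℕ} (f : Fin m → ℤ) (j : Fin m) : Bool :=
  decide (∀ j', f j = 0 ∨ f j' = 0 ∨ j = j')
def rowB {m : ℕ} (f : Fin m → ℤ) : Bool :=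
  decide ((∀ j, f j = 0 ∨ f j = 1 ∨ f j = -1) ∧ (∀ j, cellB f j = true))
def monoB {m : ℕ} (M : Fin m → Fin m → ℤ) : Bool :=
  decide ((∀ i, rowB (M i) = true) ∧ (∀ j, rowB (fun i => M i j) = true))

lemma mono_ofB {m : ℕ} (M : Matrix (Fin m) (Fin m) ℤ) (h : monoB M = true) : Mono M := by
  obtain ⟨h1, h2⟩ := of_decide_eq_true h
  exact mono_of M (fun i => (of_decide_eq_true (h1 i)).1)
    (fun i j => of_decide_eq_true ((of_decide_eq_true (h1 i)).2 j))
    (fun i i' j => of_decide_eq_true ((of_decide_eq_true (h2 j)).2 i) i')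

lemma Mono.transpose {I : Type} {M : Matrix I I ℤ} (h : Mono M) : Mono Mᵀ :=
  ⟨fun i j => h.1 j i, fun i j j' a b => h.2.2 j j' i a b, fun i i' j a b => h.2.1 j i i' a b⟩

lemma Mono.mul_entry {I : Type} [Fintype I] {M : Matrix I I ℤ} (h : Mono M) (N : Matrix I I ℤ)
    (i j : I) : (M * N) i j = 0 ∨ ∃ k, M i k ≠ 0 ∧ (M * N) i j = M i k * N k j := by
  by_cases h0 : ∃ k, M i k ≠ 0
  · obtain ⟨k, hk⟩ := h0
    right
    refine ⟨k, hk, ?_⟩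
    rw [Matrix.mul_apply]
    apply Finset.sum_eq_single k
    · intro l _ hl
      have : M i l = 0 := by
        by_contra h1
        exact hl (h.2.1 i l k h1 hk)
      rw [this, zero_mul]
    · simp
  · push Not at h0
    left
    rw [Matrix.mul_apply]
    exact Finset.sum_eq_zero (fun k _ => by rw [h0 k, zero_mul])

lemma Mono.mul_ne {I : Type} [Fintype I] {M : Matrix I I ℤ} (h : Mono M) (N : Matrix I I ℤ)
    {i j : I} (hne : (M * N) i j ≠ 0) : ∃ k, M i k ≠ 0 ∧ N k j ≠ 0 := by
  rcases h.mul_entry N i j with h0 | ⟨k, hk, he⟩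
  · exact absurd h0 hne
  · exact ⟨k, hk, fun h1 => hne (by rw [he, h1, mul_zero])⟩

lemma Mono.mul {I : Type} [Fintype I] {M N : Matrix I I ℤ} (hM : Mono M) (hN : Mono N) :
    Mono (M * N) := by
  refine ⟨?_, ?_, ?_⟩
  · intro i j
    rcases hM.mul_entry N i j with h0 | ⟨k, hk, he⟩
    · exact Or.inl h0
    · rw [he]
      rcases hM.1 i k with a | a | a <;> rcases hN.1 k j with b | b | b <;> simp [a, b]
  · intro i j j' a b
    obtain ⟨k, hk, hk2⟩ := hM.mul_ne N a
    obtain ⟨l, hl, hl2⟩ := hM.mul_ne N b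
    obtain rfl := hM.2.1 i k l hk hl
    exact hN.2.1 _ _ _ hk2 hl2
  · intro i j j' a b
    obtain ⟨k, hk, hk2⟩ := hM.mul_ne N a
    obtain ⟨l, hl, hl2⟩ := hM.mul_ne N b
    obtain rfl := hN.2.2 _ _ _ hk2 hl2
    exact hM.2.2 _ _ _ hk hl

lemma Mono.kron {I L : Type} {M : Matrix I I ℤ} {N : Matrix L L ℤ}
    (hM : Mono M) (hN : Mono N) : Mono (M ⊗ₖ N) := by
  refine ⟨?_, ?_, ?_⟩
  · rintro ⟨i, f⟩ ⟨j, g⟩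
    simp only [Matrix.kroneckerMap_apply]
    rcases hM.1 i j with a | a | a <;> rcases hN.1 f g with b | b | b <;> simp [a, b]
  · rintro ⟨i, f⟩ ⟨j, g⟩ ⟨j', g'⟩
    simp only [Matrix.kroneckerMap_apply]
    intro a b
    rw [hM.2.1 i j j' (left_ne_zero_of_mul a) (left_ne_zero_of_mul b),
      hN.2.1 f g g' (right_ne_zero_of_mul a) (right_ne_zero_of_mul b)]
  · rintro ⟨i, f⟩ ⟨j, g⟩ ⟨j', g'⟩
    simp only [Matrix.kroneckerMap_apply]
    intro a b
    rw [hM.2.2 _ _ _ (left_ne_zero_of_mul a) (left_ne_zero_of_mul b),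
      hN.2.2 _ _ _ (right_ne_zero_of_mul a) (right_ne_zero_of_mul b)]

lemma Mono.one {I : Type} [DecidableEq I] : Mono (1 : Matrix I I ℤ) := by
  refine ⟨?_, ?_, ?_⟩
  · intro i j
    by_cases h : i = j <;> simp [h, Matrix.one_apply]
  · intro i j j'
    simp only [Matrix.one_apply]
    grind
  · intro i j j'
    simp only [Matrix.one_apply]
    grind

/-- The algebraic data from which a scaled COD is built. -/
structure IsSys {I J : Type} [Fintype I] [DecidableEq I] [DecidableEq J]
    (ε : ℤ) (K : Matrix I I ℤ) (P : J → Matrix I I ℤ) (s : J → ℤ) : Prop where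
  eps : ε = 1 ∨ ε = -1
  KT : Kᵀ = ε • K
  KK : K * Kᵀ = 1
  mK : Mono K
  mP : ∀ c, Mono (P c)
  hs : ∀ c, s c = 1 ∨ s c = 2
  h1 : ∀ c d, (P c)ᵀ * P d + K * ((P d)ᵀ * P c) * Kᵀ = if c = d then s c • 1 else 0
  h2 : ∀ c d, P c * (P d)ᵀ + K * (P d * (P c)ᵀ) * Kᵀ = if c = d then s c • 1 else 0

/-- Four-dimensional (two mode) fermionic data. -/
def kF : Matrix (Fin 4) (Fin 4) ℤ := !![0,0,0,1; 0,0,1,0; 0,-1,0,0; -1,0,0,0]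
def pF : Matrix (Fin 4) (Fin 4) ℤ := !![1,0,0,0; 0,0,0,0; 0,0,0,0; 0,0,0,1]
def mF : Matrix (Fin 4) (Fin 4) ℤ := !![0,0,0,0; 0,1,0,0; 0,0,1,0; 0,0,0,0]
def bF : Fin 4 → Matrix (Fin 4) (Fin 4) ℤ :=
  ![!![0,0,1,0; 0,0,0,1; 0,0,0,0; 0,0,0,0], !![0,0,0,0; 0,0,0,0; 1,0,0,0; 0,1,0,0],
    !![0,1,0,0; 0,0,0,0; 0,0,0,-1; 0,0,0,0], !![0,0,0,0; 1,0,0,0; 0,0,0,0; 0,0,-1,0]]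

lemma kF_T : kFᵀ = -kF := by decide +kernel
lemma kF_K : kF * kFᵀ = 1 := by decide +kernel
lemma pF_T : pFᵀ = pF := by decide +kernel
lemma mF_T : mFᵀ = mF := by decide +kernel
lemma pp : pF * pF = pF := by decide +kernel
lemma mm : mF * mF = mF := by decide +kernel
lemma pm : pF * mF = 0 := by decide +kernel
lemma mp : mF * pF = 0 := by decide +kernel
lemma pm_add : pF + mF = 1 := by decide +kernel
lemma kp : kF * pF * kFᵀ = pF := by decide +kernel
lemma km : kF * mF * kFᵀ = mF := by decide +kernel
lemma b1 : ∀ f g, (bF f)ᵀ * bF g + kF * ((bF g)ᵀ * bF f) * kFᵀ = if f = g then 1 else 0 := by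
  decide +kernel
lemma b2 : ∀ f g, bF f * (bF g)ᵀ + kF * (bF g * (bF f)ᵀ) * kFᵀ = if f = g then 1 else 0 := by
  decide +kernel
lemma b3 : ∀ f, kF * ((bF f)ᵀ * pF) * kFᵀ = -(mF * bF f) := by decide +kernel
lemma b4 : ∀ f, kF * ((bF f)ᵀ * mF) * kFᵀ = -(pF * bF f) := by decide +kernel
lemma b5 : ∀ f, kF * (bF f * pF) * kFᵀ = -(mF * (bF f)ᵀ) := by decide +kernel
lemma b6 : ∀ f, kF * (bF f * mF) * kFᵀ = -(pF * (bF f)ᵀ) := by decide +kernel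
lemma b3' : ∀ f, kF * (pF * bF f) * kFᵀ = -((bF f)ᵀ * mF) := by decide +kernel
lemma b4' : ∀ f, kF * (mF * bF f) * kFᵀ = -((bF f)ᵀ * pF) := by decide +kernel
lemma b5' : ∀ f, kF * (pF * (bF f)ᵀ) * kFᵀ = -(bF f * mF) := by decide +kernel
lemma b6' : ∀ f, kF * (mF * (bF f)ᵀ) * kFᵀ = -(bF f * pF) := by decide +kernel
lemma kF_mono : Mono kF :=
  mono_ofB _ (by decide +kernel)
lemma bF_mono : ∀ f, Mono (bF f) := fun f =>
  mono_ofB _ (by revert f; decide +kernel)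
lemma kF_diag : ∀ f, kF f f = 0 := by decide +kernel

lemma mono_mix {I : Type} {A B : Matrix I I ℤ} (hA : Mono A) (hB : Mono B) :
    Mono (A ⊗ₖ pF + B ⊗ₖ mF) := by
  have key : ∀ i j f g, (A ⊗ₖ pF + B ⊗ₖ mF) (i, f) (j, g) =
      if f = g then (if f = 0 ∨ f = 3 then A i j else B i j) else 0 := by
    intro i j f g
    simp only [Matrix.add_apply, Matrix.kroneckerMap_apply]
    fin_cases f <;> fin_cases g <;> simp [pF, mF]
  refine ⟨?_, ?_, ?_⟩
  · rintro ⟨i, f⟩ ⟨j, g⟩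
    rw [key]
    have := hA.1 i j
    have := hB.1 i j
    split_ifs <;> simp_all
  · rintro ⟨i, f⟩ ⟨j, g⟩ ⟨j', g'⟩
    rw [key, key]
    have := hA.2.1 i j j'
    have := hB.2.1 i j j'
    grind
  · rintro ⟨i, f⟩ ⟨j, g⟩ ⟨j', g'⟩
    rw [key, key]
    have := hA.2.2 i j j'
    have := hB.2.2 i j j'
    grind

section step
variable {I J : Type} [Fintype I] [DecidableEq I] [DecidableEq J]

/-- New columns obtained from an old one. -/
def newP (K P : Matrix I I ℤ) : Matrix (I × Fin 4) (I × Fin 4) ℤ :=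
  P ⊗ₖ pF + (K * Pᵀ * Kᵀ) ⊗ₖ mF

lemma conj_kron (K M : Matrix I I ℤ) (N : Matrix (Fin 4) (Fin 4) ℤ) :
    (K ⊗ₖ kF) * (M ⊗ₖ N) * (K ⊗ₖ kF)ᵀ = (K * M * Kᵀ) ⊗ₖ (kF * N * kFᵀ) := by
  rw [← Matrix.kroneckerMap_transpose, ← Matrix.mul_kronecker_mul, ← Matrix.mul_kronecker_mul]

lemma newP_T (K P : Matrix I I ℤ) : (newP K P)ᵀ = Pᵀ ⊗ₖ pF + (K * P * Kᵀ) ⊗ₖ mF := by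
  unfold newP
  rw [Matrix.transpose_add, ← Matrix.kroneckerMap_transpose, ← Matrix.kroneckerMap_transpose, pF_T, mF_T]
  simp [Matrix.transpose_mul, Matrix.mul_assoc]

lemma mix_mul (A B C D : Matrix I I ℤ) :
    (A ⊗ₖ pF + B ⊗ₖ mF) * (C ⊗ₖ pF + D ⊗ₖ mF) = (A * C) ⊗ₖ pF + (B * D) ⊗ₖ mF := by
  simp [Matrix.add_mul, Matrix.mul_add, ← Matrix.mul_kronecker_mul, pp, mm, pm, mp]

lemma mix_conj (K A B : Matrix I I ℤ) :
    (K ⊗ₖ kF) * (A ⊗ₖ pF + B ⊗ₖ mF) * (K ⊗ₖ kF)ᵀ =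
      (K * A * Kᵀ) ⊗ₖ pF + (K * B * Kᵀ) ⊗ₖ mF := by
  rw [Matrix.mul_add, Matrix.add_mul, conj_kron, conj_kron, kp, km]

variable {ε : ℤ} {K : Matrix I I ℤ} {P : J → Matrix I I ℤ} {s : J → ℤ}

lemma IsSys.KtK (h : IsSys ε K P s) : Kᵀ * K = 1 := mul_eq_one_comm.1 h.KK

lemma IsSys.KcK (h : IsSys ε K P s) (M : Matrix I I ℤ) : K * (K * M * Kᵀ) * Kᵀ = M := by
  have e : ε * ε = 1 := by rcases h.eps with a | a <;> simp [a]
  have hk : K * K = ε • 1 := by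
    have := h.KK
    rw [h.KT] at this
    rw [← this, Matrix.mul_smul, smul_smul, e, one_smul]
  have hk' : Kᵀ * Kᵀ = ε • 1 := by
    rw [← Matrix.transpose_mul, hk, Matrix.transpose_smul, Matrix.transpose_one]
  calc K * (K * M * Kᵀ) * Kᵀ = (K * K) * M * (Kᵀ * Kᵀ) := by simp only [Matrix.mul_assoc]
    _ = M := by rw [hk, hk', Matrix.smul_mul, Matrix.one_mul, Matrix.smul_mul, Matrix.mul_smul,
          Matrix.mul_one, smul_smul, e, one_smul]

lemma IsSys.cmul (h : IsSys ε K P s) (M N : Matrix I I ℤ) :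
    (K * M * Kᵀ) * (K * N * Kᵀ) = K * (M * N) * Kᵀ := by
  calc _ = K * M * (Kᵀ * K) * N * Kᵀ := by simp only [Matrix.mul_assoc]
    _ = _ := by rw [h.KtK]; simp [Matrix.mul_assoc]

lemma mix_const (z : ℤ) (p : Prop) [Decidable p] (A B : Matrix I I ℤ)
    (hA : A = if p then z • 1 else 0) (hB : B = if p then z • 1 else 0) :
    A ⊗ₖ pF + B ⊗ₖ mF = if p then z • 1 else 0 := by
  rw [hA, hB, ← Matrix.kronecker_add, pm_add]
  split_ifs
  · rw [Matrix.smul_kronecker, Matrix.one_kronecker_one]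
  · simp

lemma conj_one (h : IsSys ε K P s) (z : ℤ) (p : Prop) [Decidable p] :
    K * (if p then z • (1 : Matrix I I ℤ) else 0) * Kᵀ = if p then z • 1 else 0 := by
  split_ifs
  · rw [Matrix.mul_smul, Matrix.smul_mul, Matrix.mul_one, h.KK]
  · simp

theorem IsSys.step (h : IsSys ε K P s) :
    IsSys (-ε) (K ⊗ₖ kF)
      (Sum.elim (fun c => newP K (P c)) (fun f => (1 : Matrix I I ℤ) ⊗ₖ bF f))
      (Sum.elim s (fun _ : Fin 4 => 1)) where
  eps := by rcases h.eps with a | a <;> simp [a]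
  KT := by
    rw [← Matrix.kroneckerMap_transpose, h.KT, kF_T]
    ext ⟨i, f⟩ ⟨j, g⟩
    simp only [Matrix.kroneckerMap_apply, Matrix.smul_apply, Matrix.neg_apply, smul_eq_mul]
    ring
  KK := by
    rw [← Matrix.kroneckerMap_transpose, ← Matrix.mul_kronecker_mul, h.KK, kF_K]
    simp
  mK := h.mK.kron kF_mono
  mP := by
    rintro (c | f)
    · exact mono_mix (h.mP c) ((h.mK.mul (h.mP c).transpose).mul h.mK.transpose)
    · exact Mono.one.kron (bF_mono f)
  hs := by
    rintro (c | f)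
    · exact h.hs c
    · simp
  h1 := by
    rintro (c | f) (d | g)
    · simp only [Sum.elim_inl, Sum.inl.injEq]
      rw [newP_T, newP_T, newP, newP, mix_mul, mix_mul, mix_conj, add_add_add_comm,
        ← Matrix.add_kronecker, ← Matrix.add_kronecker]
      apply mix_const _ _ _ _ (h.h1 c d)
      rw [h.cmul, h.cmul, h.KcK, ← conj_one h, ← h.h2 c d, Matrix.mul_add, Matrix.add_mul, h.KcK]
    · simp only [Sum.elim_inl, Sum.elim_inr, reduceCtorEq, if_false]
      rw [newP_T, newP, ← Matrix.kroneckerMap_transpose, Matrix.add_mul, Matrix.mul_add,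
        Matrix.mul_add, Matrix.add_mul]
      simp only [← Matrix.mul_kronecker_mul, ← Matrix.kroneckerMap_transpose, Matrix.transpose_one, Matrix.one_mul,
        Matrix.mul_one, h.KcK, b3, b4]
      ext ⟨i, f⟩ ⟨j, g⟩
      simp
    · simp only [Sum.elim_inl, Sum.elim_inr, reduceCtorEq, if_false]
      rw [newP_T, newP, ← Matrix.kroneckerMap_transpose, Matrix.add_mul, Matrix.mul_add,
        Matrix.mul_add, Matrix.add_mul]
      simp only [← Matrix.mul_kronecker_mul, ← Matrix.kroneckerMap_transpose, Matrix.transpose_one, Matrix.one_mul,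
        Matrix.mul_one, h.KcK, b3', b4']
      ext ⟨i, f⟩ ⟨j, g⟩
      simp
    · simp only [Sum.elim_inr, Sum.inr.injEq]
      rw [← Matrix.kroneckerMap_transpose, ← Matrix.kroneckerMap_transpose]
      simp only [← Matrix.mul_kronecker_mul, ← Matrix.kroneckerMap_transpose, Matrix.transpose_one, Matrix.one_mul,
        Matrix.mul_one, h.KK]
      rw [← Matrix.kronecker_add, b1]
      split_ifs <;> simp
  h2 := by
    rintro (c | f) (d | g)
    · simp only [Sum.elim_inl, Sum.inl.injEq]
      rw [newP_T, newP_T, newP, newP, mix_mul, mix_mul, mix_conj, add_add_add_comm,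
        ← Matrix.add_kronecker, ← Matrix.add_kronecker]
      apply mix_const _ _ _ _ (h.h2 c d)
      rw [h.cmul, h.cmul, h.KcK, ← conj_one h, ← h.h1 c d, Matrix.mul_add, Matrix.add_mul, h.KcK]
    · simp only [Sum.elim_inl, Sum.elim_inr, reduceCtorEq, if_false]
      rw [newP_T, newP, ← Matrix.kroneckerMap_transpose, Matrix.add_mul, Matrix.mul_add,
        Matrix.mul_add, Matrix.add_mul]
      simp only [← Matrix.mul_kronecker_mul, ← Matrix.kroneckerMap_transpose, Matrix.transpose_one, Matrix.one_mul,
        Matrix.mul_one, h.KcK, b5, b6]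
      ext ⟨i, f⟩ ⟨j, g⟩
      simp
    · simp only [Sum.elim_inl, Sum.elim_inr, reduceCtorEq, if_false]
      rw [newP_T, newP, ← Matrix.kroneckerMap_transpose, Matrix.add_mul, Matrix.mul_add,
        Matrix.mul_add, Matrix.add_mul]
      simp only [← Matrix.mul_kronecker_mul, ← Matrix.kroneckerMap_transpose, Matrix.transpose_one, Matrix.one_mul,
        Matrix.mul_one, h.KcK, b5', b6']
      ext ⟨i, f⟩ ⟨j, g⟩
      simp
    · simp only [Sum.elim_inr, Sum.inr.injEq]
      rw [← Matrix.kroneckerMap_transpose, ← Matrix.kroneckerMap_transpose]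
      simp only [← Matrix.mul_kronecker_mul, ← Matrix.kroneckerMap_transpose, Matrix.transpose_one, Matrix.one_mul,
        Matrix.mul_one, h.KK]
      rw [← Matrix.kronecker_add, b2]
      split_ifs <;> simp

end step

/-- Existence of a system with `p` rows and `q` columns. -/
def Ex (ε : ℤ) (p q : ℕ) : Prop :=
  ∃ (I J : Type) (_ : Fintype I) (_ : DecidableEq I) (_ : Fintype J) (_ : DecidableEq J)
    (K : Matrix I I ℤ) (P : J → Matrix I I ℤ) (s : J → ℤ),
    Fintype.card I = p ∧ Fintype.card J = q ∧ IsSys ε K P s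

/-- As `Ex`, with zero diagonal of the conjugation matrix. -/
def ExZ (ε : ℤ) (p q : ℕ) : Prop :=
  ∃ (I J : Type) (_ : Fintype I) (_ : DecidableEq I) (_ : Fintype J) (_ : DecidableEq J)
    (K : Matrix I I ℤ) (P : J → Matrix I I ℤ) (s : J → ℤ),
    Fintype.card I = p ∧ Fintype.card J = q ∧ IsSys ε K P s ∧ ∀ i, K i i = 0

lemma ExZ.ex {ε : ℤ} {p q : ℕ} (h : ExZ ε p q) : Ex ε p q := by
  obtain ⟨I, J, i1, i2, i3, i4, K, P, s, hp, hq, hS, _⟩ := h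
  exact ⟨I, J, i1, i2, i3, i4, K, P, s, hp, hq, hS⟩

lemma Ex.step {ε : ℤ} {p q : ℕ} (h : Ex ε p q) : ExZ (-ε) (p * 4) (q + 4) := by
  obtain ⟨I, J, i1, i2, i3, i4, K, P, s, hp, hq, hS⟩ := h
  refine ⟨I × Fin 4, J ⊕ Fin 4, inferInstance, inferInstance, inferInstance, inferInstance,
    _, _, _, by simp [hp], by simp [hq], hS.step, ?_⟩
  rintro ⟨i, f⟩
  simp [kF_diag]

lemma Ex.step2 {p q : ℕ} (h : Ex 1 p q) : ExZ 1 (p * 16) (q + 8) := by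
  have := h.step.ex.step
  rwa [neg_neg, mul_assoc, add_assoc] at this

lemma Ex.iter {p q : ℕ} (h : Ex 1 p q) (t : ℕ) : Ex 1 (p * 16 ^ t) (q + 8 * t) := by
  induction t with
  | zero => simpa using h
  | succ t ih =>
    have := ih.step2.ex
    rwa [mul_assoc, ← pow_succ, add_assoc, ← Nat.mul_succ] at this

lemma ExZ.iter {p q : ℕ} (h : ExZ 1 p q) (t : ℕ) : ExZ 1 (p * 16 ^ t) (q + 8 * t) := by
  cases t with
  | zero => simpa using h
  | succ t =>
    have := (h.ex.iter t).step2
    rwa [mul_assoc, ← pow_succ, add_assoc, ← Nat.mul_succ] at this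

lemma ex1 : Ex 1 1 1 := by
  refine ⟨Fin 1, Fin 1, inferInstance, inferInstance, inferInstance, inferInstance,
    1, fun _ => 1, fun _ => 2, rfl, rfl, ?_⟩
  constructor <;> first | (exact mono_ofB _ (by decide +kernel)) |
    (exact fun c => mono_ofB _ (by revert c; decide +kernel)) | decide +kernel

lemma ex2 : ExZ 1 2 2 := by
  refine ⟨Fin 2, Fin 2, inferInstance, inferInstance, inferInstance, inferInstance,
    !![0,1;1,0], ![!![1,0;0,0], !![0,0;0,1]], fun _ => 1, rfl, rfl, ?_, by decide +kernel⟩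
  constructor <;> first | (exact mono_ofB _ (by decide +kernel)) |
    (exact fun c => mono_ofB _ (by revert c; decide +kernel)) | decide +kernel

lemma exQ : Ex (-1) 2 4 := by
  refine ⟨Fin 2, Fin 4, inferInstance, inferInstance, inferInstance, inferInstance,
    !![0,1;-1,0], ![!![1,0;0,0], !![0,0;0,1], !![0,1;0,0], !![0,0;1,0]],
    fun _ => 1, rfl, rfl, ?_⟩
  constructor <;> first | (exact mono_ofB _ (by decide +kernel)) |
    (exact fun c => mono_ofB _ (by revert c; decide +kernel)) | decide +kernel

lemma ex4 : ExZ 1 4 4 := by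
  refine ⟨Fin 4, Fin 4, inferInstance, inferInstance, inferInstance, inferInstance,
    !![0,0,0,1; 0,0,-1,0; 0,-1,0,0; 1,0,0,0],
    ![!![1,0,0,0; 0,1,0,0; 0,0,0,0; 0,0,0,0], !![0,0,0,0; 0,0,0,0; 0,0,1,0; 0,0,0,1],
      !![0,0,1,0; 0,0,0,1; 0,0,0,0; 0,0,0,0], !![0,0,0,0; 0,0,0,0; 1,0,0,0; 0,1,0,0]],
    fun _ => 1, rfl, rfl, ?_, by decide +kernel⟩
  constructor <;> first | (exact mono_ofB _ (by decide +kernel)) |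
    (exact fun c => mono_ofB _ (by revert c; decide +kernel)) | decide +kernel

lemma ex8 : ExZ 1 8 8 := by
  have := exQ.step
  rwa [neg_neg] at this

lemma ex_nu (n : ℕ) (hn : 2 ≤ n) : ∃ q, n ≤ q ∧ ExZ 1 (nu n) q := by
  have hp : ∀ t, 2 ^ (4 * t) = 16 ^ t := fun t => by rw [pow_mul]; norm_num
  have hlt : (n - 1) % 8 < 8 := Nat.mod_lt _ (by norm_num)
  have hd := Nat.div_add_mod (n - 1) 8
  unfold nu delta
  generalize (n - 1) / 8 = t at *
  generalize (n - 1) % 8 = r at *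
  have e8 : ExZ 1 (2 ^ (4 * t + 3)) (8 + 8 * t) := by
    have := ex8.iter t
    rwa [pow_add, hp, mul_comm]
  have e4 : ExZ 1 (2 ^ (4 * t + 2)) (4 + 8 * t) := by
    have := ex4.iter t
    rwa [pow_add, hp, mul_comm]
  have e2 : ExZ 1 (2 ^ (4 * t + 1)) (2 + 8 * t) := by
    have := ex2.iter t
    rwa [pow_add, hp, mul_comm]
  match r, hlt with
  | 0, _ =>
    obtain ⟨u, rfl⟩ : ∃ u, t = u + 1 := ⟨t - 1, by omega⟩
    refine ⟨1 + 8 * u + 8, by omega, ?_⟩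
    have := (ex1.iter u).step2
    rwa [one_mul, ← pow_succ, ← hp] at this
  | 1, _ => exact ⟨_, by omega, e2⟩
  | 2, _ => exact ⟨_, by omega, e4⟩
  | 3, _ => exact ⟨_, by omega, e4⟩
  | 4, _ => exact ⟨_, by omega, e8⟩
  | 5, _ => exact ⟨_, by omega, e8⟩
  | 6, _ => exact ⟨_, by omega, e8⟩
  | 7, _ => exact ⟨_, by omega, e8⟩

lemma sum_half {I : Type} [Fintype I] [DecidableEq I] {p : ℕ} (e : I ≃ Fin p) (σ : I → I)
    (h2 : ∀ i, σ (σ i) = i) (hne : ∀ i, σ i ≠ i) {R : Type} [AddCommMonoid R] (f : I → R) :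
    ∑ i, f i = ∑ v : {i : I // e i < e (σ i)}, (f v + f (σ v)) := by
  rw [Finset.sum_add_distrib]
  rw [← Finset.sum_filter_add_sum_filter_not Finset.univ (fun i => e i < e (σ i))]
  congr 1
  · exact (Finset.sum_subtype _ (by simp) _)
  · rw [← Finset.sum_subtype (Finset.univ.filter (fun i => e i < e (σ i))) (by simp)
      (fun i => f (σ i))]
    have key : ∀ i, ¬ e i < e (σ i) ↔ e (σ i) < e i := by
      intro i
      have : e (σ i) ≠ e i := fun h => hne i (e.injective h)
      rw [not_lt]
      exact ⟨fun h => lt_of_le_of_ne h this, le_of_lt⟩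
    apply Finset.sum_nbij' σ σ
    · intro i hi
      simp only [Finset.mem_filter, Finset.mem_univ, true_and, key, h2] at hi ⊢
      exact hi
    · intro i hi
      simp only [Finset.mem_filter, Finset.mem_univ, true_and, key, h2] at hi ⊢
      exact hi
    · intro i _; exact h2 i
    · intro i _; exact h2 i
    · intro i _; rw [h2]

theorem stmt7 (n : ℕ) (hn : 2 ≤ n) :
    ∃ A B : Fin (nu n / 2) → Matrix (Fin (nu n)) (Fin n) ℂ,
      (∀ (i : Fin (nu n / 2)) (r : Fin (nu n)) (c : Fin n),
        A i r c ∈ ({0, 1, -1, ((Real.sqrt 2 : ℝ) : ℂ)⁻¹, -((Real.sqrt 2 : ℝ) : ℂ)⁻¹} : Set ℂ) ∧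
        B i r c ∈ ({0, 1, -1, ((Real.sqrt 2 : ℝ) : ℂ)⁻¹, -((Real.sqrt 2 : ℝ) : ℂ)⁻¹} : Set ℂ)) ∧
      (∀ (r : Fin (nu n)) (c : Fin n) (s₁ s₂ : Fin (nu n / 2) × Bool),
        (cond s₁.2 (A s₁.1) (B s₁.1)) r c ≠ 0 →
        (cond s₂.2 (A s₂.1) (B s₂.1)) r c ≠ 0 → s₁ = s₂) ∧
      (∀ x : Fin (nu n / 2) → ℂ,
        (∑ i, (x i • A i + (starRingEnd ℂ) (x i) • B i))ᴴ *
          (∑ i, (x i • A i + (starRingEnd ℂ) (x i) • B i)) =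
        (∑ i, (Complex.normSq (x i) : ℂ)) • (1 : Matrix (Fin n) (Fin n) ℂ)) := by
  obtain ⟨q, hq, I, J, i1, i2, i3, i4, K, P, s, hI, hJ, hS, hdiag⟩ := ex_nu n hn
  have e : I ≃ Fin (nu n) := Fintype.equivFinOfCardEq hI
  have g : Fin n ↪ J := (Fin.castLEEmb hq).trans (Fintype.equivFinOfCardEq hJ).symm.toEmbedding
  have Ksymm : ∀ i j, K j i = K i j := by
    intro i j
    have := congrFun (congrFun hS.KT i) j
    simpa using this
  have hrow : ∀ i, ∃ j, K i j ≠ 0 := by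
    intro i
    have := congrFun (congrFun hS.KK i) i
    rw [Matrix.one_apply_eq] at this
    obtain ⟨k, hk, -⟩ := hS.mK.mul_ne Kᵀ (by rw [this]; exact one_ne_zero)
    exact ⟨k, hk⟩
  choose σ hσ using hrow
  have hσσ : ∀ i, σ (σ i) = i := fun i =>
    hS.mK.2.1 (σ i) _ _ (hσ (σ i)) (by rw [Ksymm]; exact hσ i)
  have hσne : ∀ i, σ i ≠ i := fun i h => hσ i (by rw [h]; exact hdiag i)
  have Kapp : ∀ i j, j ≠ σ i → K i j = 0 := by
    intro i j hj
    by_contra h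
    exact hj (hS.mK.2.1 i _ _ h (hσ i))
  have hκ : ∀ i, K i (σ i) = 1 ∨ K i (σ i) = -1 := fun i => (hS.mK.1 i (σ i)).resolve_left (hσ i)
  have hκs : ∀ i, K (σ i) i = K i (σ i) := fun i => Ksymm _ _
  have hsum : ∀ f : I → ℂ, ∑ i, f i = ∑ v : {i : I // e i < e (σ i)}, (f v + f (σ v)) :=
    fun f => sum_half e σ hσσ hσne f
  have hcard : Fintype.card {i : I // e i < e (σ i)} = nu n / 2 := by
    have := sum_half e σ hσσ hσne (fun _ => (1 : ℕ))
    simp [hI] at this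
    omega
  have u : Fin (nu n / 2) ≃ {i : I // e i < e (σ i)} := (Fintype.equivFinOfCardEq hcard).symm
  obtain ⟨ρ, hρ⟩ : ∃ ρ : J → ℂ, ∀ c, (ρ c = 1 ∧ s c = 1) ∨
      (ρ c = ((Real.sqrt 2 : ℝ) : ℂ)⁻¹ ∧ s c = 2) := by
    have : ∀ c, ∃ z : ℂ, (z = 1 ∧ s c = 1) ∨ (z = ((Real.sqrt 2 : ℝ) : ℂ)⁻¹ ∧ s c = 2) := by
      intro c
      rcases hS.hs c with h | h
      · exact ⟨1, Or.inl ⟨rfl, h⟩⟩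
      · exact ⟨_, Or.inr ⟨rfl, h⟩⟩
    choose ρ h using this
    exact ⟨ρ, h⟩
  have hρs : ∀ c, ρ c * ρ c * (s c : ℂ) = 1 := by
    intro c
    rcases hρ c with ⟨a, b⟩ | ⟨a, b⟩
    · simp [a, b]
    · have h2 : ((Real.sqrt 2 : ℝ) : ℂ) * ((Real.sqrt 2 : ℝ) : ℂ) = 2 := by
        rw [← Complex.ofReal_mul, Real.mul_self_sqrt (by norm_num)]; norm_num
      rw [a, b, ← mul_inv, h2]; norm_num
  have hρc : ∀ c, (starRingEnd ℂ) (ρ c) = ρ c := by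
    intro c
    rcases hρ c with ⟨a, b⟩ | ⟨a, b⟩ <;> simp [a]
  have hent : ∀ (c : J) (z : ℤ), (z = 0 ∨ z = 1 ∨ z = -1) →
      ρ c * (z : ℂ) ∈
        ({0, 1, -1, ((Real.sqrt 2 : ℝ) : ℂ)⁻¹, -((Real.sqrt 2 : ℝ) : ℂ)⁻¹} : Set ℂ) := by
    intro c z hz
    rcases hρ c with ⟨a, b⟩ | ⟨a, b⟩ <;> rcases hz with h | h | h <;> simp [a, h]
  refine ⟨fun v => Matrix.of fun r c => ρ (g c) * ((P (g c) (e.symm r) (u v) : ℤ) : ℂ),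
    fun v => Matrix.of fun r c => ρ (g c) *
      ((P (g c) (e.symm r) (σ (u v)) * K (u v) (σ (u v)) : ℤ) : ℂ), ?_, ?_, ?_⟩
  · intro v r c
    refine ⟨hent _ _ ((hS.mP _).1 _ _), hent _ _ ?_⟩
    rcases (hS.mP (g c)).1 (e.symm r) (σ (u v)) with a | a | a <;>
      rcases hκ (u v) with b | b <;> simp [a, b]
  · have conv : ∀ r c (t : Fin (nu n / 2) × Bool),
        (cond t.2 (Matrix.of fun (r : Fin (nu n)) (c : Fin n) =>
            ρ (g c) * ((P (g c) (e.symm r) (u t.1) : ℤ) : ℂ))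
          (Matrix.of fun r c => ρ (g c) *
            ((P (g c) (e.symm r) (σ (u t.1)) * K (u t.1) (σ (u t.1)) : ℤ) : ℂ))) r c ≠ 0 →
        P (g c) (e.symm r) (cond t.2 (u t.1 : I) (σ (u t.1))) ≠ 0 := by
      rintro r c ⟨v, b⟩ h h0
      apply h
      cases b
      · simp only [cond_false] at h0 ⊢
        simp [h0]
      · simp only [cond_true] at h0 ⊢
        simp [h0]
    intro r c s₁ s₂ k1 k2
    have := (hS.mP (g c)).2.1 _ _ _ (conv r c s₁ k1) (conv r c s₂ k2)
    obtain ⟨v, b⟩ := s₁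
    obtain ⟨w, b'⟩ := s₂
    have lv := (u v).2
    have lw := (u w).2
    cases b <;> cases b' <;> simp only [cond_true, cond_false] at this
    · have : (u v : I) = u w := by rw [← hσσ (u v), this, hσσ]
      have := u.injective (Subtype.ext this)
      rw [this]
    · rw [← this, hσσ] at lw
      exact absurd lv (lt_asymm lw)
    · rw [this, hσσ] at lv
      exact absurd lv (lt_asymm lw)
    · have := u.injective (Subtype.ext this)
      rw [this]
  · intro x
    -- the real vector `w`
    obtain ⟨w, hw1, hw2⟩ : ∃ w : I → ℂ, (∀ v, w (u v) = x v) ∧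
        (∀ v, w (σ (u v)) = (K (u v) (σ (u v)) : ℂ) * (starRingEnd ℂ) (x v)) := by
      refine ⟨fun i => if h : e i < e (σ i) then x (u.symm ⟨i, h⟩) else
        if h' : e (σ i) < e (σ (σ i)) then
          (K i (σ i) : ℂ) * (starRingEnd ℂ) (x (u.symm ⟨σ i, h'⟩)) else 0, ?_, ?_⟩
      · intro v
        have := (u v).2
        simp [this]
      · intro v
        have := (u v).2
        simp only [hσσ]
        rw [dif_neg (lt_asymm this), dif_pos this, hκs]
        simp
    have hκ2 : ∀ i, (K i (σ i) : ℂ) * (K i (σ i) : ℂ) = 1 := by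
      intro i
      rcases hκ i with h | h <;> simp [h]
    have hsum' : ∀ f : I → ℂ, ∑ i, f i = ∑ v, (f (u v) + f (σ (u v))) := by
      intro f
      rw [hsum]
      exact (Equiv.sum_comp u (fun v => f v + f (σ v))).symm
    have hcov : ∀ i : I, ∃ v, i = (u v : I) ∨ i = σ (u v) := by
      intro i
      by_cases h : e i < e (σ i)
      · exact ⟨u.symm ⟨i, h⟩, Or.inl (by simp)⟩
      · have h' : e (σ i) < e (σ (σ i)) := by
          rw [hσσ]
          exact lt_of_le_of_ne (not_lt.1 h) (fun h => hσne i (e.injective h))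
        exact ⟨u.symm ⟨σ i, h'⟩, Or.inr (by simp [hσσ])⟩
    have hwc0 : ∀ i, (starRingEnd ℂ) (w i) = (K i (σ i) : ℂ) * w (σ i) := by
      intro i
      obtain ⟨v, rfl | rfl⟩ := hcov i
      · rw [hw1, hw2, ← mul_assoc, hκ2, one_mul]
      · rw [hσσ, hw1, hw2, hκs]; simp
    set Kc : Matrix I I ℂ := K.map (Int.castRingHom ℂ) with hKc
    set Pc : J → Matrix I I ℂ := fun c => (P c).map (Int.castRingHom ℂ) with hPc
    have hwc : star w = Kc *ᵥ w := by
      ext i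
      rw [Pi.star_apply, Matrix.mulVec, dotProduct, Finset.sum_eq_single (σ i)]
      · simpa [hKc] using hwc0 i
      · intro j _ hj
        simp [hKc, Kapp i j hj]
      · simp
    have hKcT : Kcᵀ = Kc := by
      ext i j
      simp [hKc, Ksymm i j]
    have h1 : ∀ c d, (Pc c)ᵀ * Pc d + Kc * ((Pc d)ᵀ * Pc c) * Kc =
        if c = d then (s c : ℂ) • 1 else 0 := by
      intro c d
      have := congrArg (fun M : Matrix I I ℤ => M.map (Int.castRingHom ℂ)) (hS.h1 c d)
      simp only [Matrix.map_add _ (map_add (Int.castRingHom ℂ)), Matrix.map_mul,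
        Matrix.transpose_map] at this
      rw [← hKc, hKcT] at this
      refine this.trans ?_
      split_ifs
      · ext i j
        simp only [Matrix.map_apply, Matrix.smul_apply, Matrix.one_apply]
        split_ifs <;> simp
      · ext; simp
    have hww : star w ⬝ᵥ w = 2 * ∑ i, (Complex.normSq (x i) : ℂ) := by
      rw [dotProduct, hsum', Finset.mul_sum]
      apply Finset.sum_congr rfl
      intro v _
      simp only [Pi.star_apply, hw1, hw2, star_mul', RCLike.star_def, map_mul, Complex.conj_conj,
        map_intCast]
      rw [Complex.normSq_eq_conj_mul_self]
      linear_combination (x v * (starRingEnd ℂ) (x v)) * hκ2 (u v)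
    have hG : ∀ r c, (∑ v, (x v • (Matrix.of fun (r : Fin (nu n)) (c : Fin n) =>
        ρ (g c) * ((P (g c) (e.symm r) (u v) : ℤ) : ℂ)) + (starRingEnd ℂ) (x v) •
          (Matrix.of fun r c => ρ (g c) *
      ((P (g c) (e.symm r) (σ (u v)) * K (u v) (σ (u v)) : ℤ) : ℂ)))) r c
        = ρ (g c) * (Pc (g c) *ᵥ w) (e.symm r) := by
      intro r c
      rw [Matrix.sum_apply, Matrix.mulVec, dotProduct, hsum', Finset.mul_sum]
      apply Finset.sum_congr rfl
      intro v _
      simp [hw1, hw2, hPc]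
      ring
    ext c d
    rw [Matrix.mul_apply]
    simp only [Matrix.conjTranspose_apply, hG]
    have hX : star (Pc (g c) *ᵥ w) ⬝ᵥ (Pc (g d) *ᵥ w) =
        star w ⬝ᵥ (((Pc (g c))ᵀ * Pc (g d)) *ᵥ w) := by
      rw [Matrix.star_mulVec, ← Matrix.dotProduct_mulVec, Matrix.mulVec_mulVec]
      congr 3
      ext i j
      simp [hPc]
    have hX2 : star w ⬝ᵥ (((Pc (g c))ᵀ * Pc (g d)) *ᵥ w) =
        star w ⬝ᵥ ((Kc * ((Pc (g d))ᵀ * Pc (g c)) * Kc) *ᵥ w) := by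
      have hKK : Kc *ᵥ star w = w := by
        rw [← star_star (Kc *ᵥ star w), Matrix.star_mulVec, star_star]
        have : Kcᴴ = Kc := by
          ext i j
          simp [hKc, Ksymm i j]
        rw [this, ← Matrix.mulVec_transpose, hKcT, ← hwc, star_star]
      have l : star w ⬝ᵥ (((Pc (g c))ᵀ * Pc (g d)) *ᵥ w) =
          w ⬝ᵥ (((Pc (g d))ᵀ * Pc (g c)) *ᵥ star w) := by
        rw [dotProduct_comm, ← Matrix.vecMul_transpose, ← Matrix.dotProduct_mulVec]
        simp [Matrix.transpose_mul]
      rw [l]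
      generalize (Pc (g d))ᵀ * Pc (g c) = Q
      rw [← Matrix.mulVec_mulVec, ← hwc, ← Matrix.mulVec_mulVec, Matrix.dotProduct_mulVec (star w),
        ← Matrix.mulVec_transpose, hKcT, hKK]
    have hX3 : 2 * (star w ⬝ᵥ (((Pc (g c))ᵀ * Pc (g d)) *ᵥ w)) =
        if c = d then (s (g c) : ℂ) * (2 * ∑ i, (Complex.normSq (x i) : ℂ)) else 0 := by
      rw [two_mul]
      conv_lhs => rw [hX2]
      nth_rewrite 1 [← hX2]
      rw [← dotProduct_add, ← Matrix.add_mulVec, h1]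
      simp only [g.injective.eq_iff]
      split_ifs
      · rw [Matrix.smul_mulVec, Matrix.one_mulVec, dotProduct_smul, hww, smul_eq_mul]
      · simp
    have hX4 : ∑ r, star (ρ (g c) * (Pc (g c) *ᵥ w) (e.symm r)) *
        (ρ (g d) * (Pc (g d) *ᵥ w) (e.symm r)) =
        ρ (g c) * ρ (g d) * (star (Pc (g c) *ᵥ w) ⬝ᵥ (Pc (g d) *ᵥ w)) := by
      rw [dotProduct, ← Equiv.sum_comp e.symm, Finset.mul_sum]
      apply Finset.sum_congr rfl
      intro r _
      rw [star_mul', RCLike.star_def, hρc, Pi.star_apply, RCLike.star_def]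
      ring
    rw [hX4, hX]
    by_cases hcd : c = d
    · subst hcd
      rw [if_pos rfl] at hX3
      rw [Matrix.smul_apply, Matrix.one_apply_eq, smul_eq_mul, mul_one]
      linear_combination (ρ (g c) * ρ (g c) / 2) * hX3 +
        (∑ i, (Complex.normSq (x i) : ℂ)) * hρs (g c)
    · rw [if_neg hcd] at hX3
      rw [Matrix.smul_apply, Matrix.one_apply_ne hcd, smul_zero]
      linear_combination (ρ (g c) * ρ (g d) / 2) * hX3
end

section
/- The minimum decoding delay of a rate-1/2 complex orthogonal design (admitting arbitrary complex linear combinations of the variables as entries) for 9 transmit antennas is 16. Precisely: (a) there exist complex 16×9 matrices A_i, B_i (0 ≤ i < 8) such that for all x ∈ ℂ^8, G(x) = Σ_{i<8} (x_i A_i + conj(x_i) B_i) satisfies G(x)ᴴG(x) = (Σ_{i<8} |x_i|²)·I_9; and (b) for every integer x with 1 ≤ x ≤ 7, there do not exist complex 2x×9 matrices A_i, B_i (0 ≤ i < x) such that for all z ∈ ℂ^x, G(z) = Σ_{i<x} (z_i A_i + conj(z_i) B_i) satisfies G(z)ᴴG(z) = (Σ_{i<x} |z_i|²)·I_9. -/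
section

open MvPolynomial
section
variable {σ : Type*}

/-- Substitution of zero for one variable. -/
noncomputable def killVar [DecidableEq σ] (c : σ) : MvPolynomial σ ℝ →ₐ[ℝ] MvPolynomial σ ℝ :=
  aeval (fun i => if i = c then (0 : MvPolynomial σ ℝ) else X i)

lemma killVar_self [DecidableEq σ] (c : σ) : killVar c (X c) = 0 := by simp [killVar]

lemma killVar_ne [DecidableEq σ] {c d : σ} (h : d ≠ c) : killVar c (X d) = X d := by
  simp [killVar, h]

/-- A polynomial killed by setting one variable to zero is a multiple of that variable. -/
lemma exists_mul_of_subst [DecidableEq σ] (c : σ) (p : MvPolynomial σ ℝ) {n : ℕ} (hp : p.IsHomogeneous (n+1))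
    (h : killVar c p = 0) :
    ∃ w : MvPolynomial σ ℝ, w.IsHomogeneous n ∧ p = X c * w := by
  have h1 : (X c : MvPolynomial σ ℝ) ∣ p := by
    have h2 : ∀ q : MvPolynomial σ ℝ, (X c : MvPolynomial σ ℝ) ∣
        q - killVar c q := by
      intro q
      induction q using MvPolynomial.induction_on with
      | C a => simp [killVar]
      | add p q hp hq => 
        rw [map_add, add_sub_add_comm]; exact dvd_add hp hq
      | mul_X p i hp =>
        rw [map_mul]
        by_cases hi : i = c
        · subst hi; simp [killVar_self]
        · rw [killVar_ne hi, ← sub_mul]; exact hp.mul_right _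
    have := h2 p
    rwa [h, sub_zero] at this
  obtain ⟨w, hw⟩ := h1
  refine ⟨homogeneousComponent n w, homogeneousComponent_isHomogeneous _ _, ?_⟩
  by_cases h0 : w = 0
  · simp [hw, h0]
  have hp' := hp
  rw [hw] at hp'
  have hwh : w.IsHomogeneous n := by
    intro d hd
    have hc : coeff (d + Finsupp.single c 1) (X c * w) ≠ 0 := by
      rw [mul_comm, coeff_mul_X]; exact hd
    have := hp' hc
    simp [map_add, Finsupp.weight_single] at this
    exact this
  rw [homogeneousComponent_of_mem hwh, if_pos rfl, hw]

lemma homog_subst [DecidableEq σ] (c : σ) (p : MvPolynomial σ ℝ) {n : ℕ} (hp : p.IsHomogeneous n) :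
    (killVar c p).IsHomogeneous n := by
  have := hp.aeval (fun i => if i = c then (0 : MvPolynomial σ ℝ) else X i) (n := 1) (fun i => by
    split_ifs
    · exact isHomogeneous_zero _ _ _
    · exact isHomogeneous_X _ _)
  simpa [killVar] using this

lemma toeplitz_one [DecidableEq σ] (e : ℕ → σ) (a b : ℕ) (he : Set.InjOn e (Set.Iic b))
    (u : ℕ → MvPolynomial σ ℝ) (hu : ∀ k, (u k).IsHomogeneous a)
    (h : ∀ i ≤ a, ∑ j ∈ Finset.range (b+1), X (e j) * u (i + j) = 0) :
    ∀ k ≤ a + b, u k = 0 := by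
  induction b generalizing a u with
  | zero =>
    intro k hk
    have := h k (by omega)
    simpa [X_ne_zero] using this
  | succ b ihb =>
    have he' : Set.InjOn e (Set.Iic b) := he.mono (Set.Iic_subset_Iic.2 (by omega))
    have hne : ∀ j ∈ Finset.range (b+1), e j ≠ e (b+1) := by
      intro j hj hh
      have := he (by simp at hj ⊢; omega) (by simp) hh
      simp at hj; omega
    induction a generalizing u with
    | zero =>
      have key := ihb 0 he' (fun k => killVar (e (b+1)) (u k))
        (fun k => homog_subst _ _ (hu k)) (by
          intro i hi
          have := congrArg (killVar (e (b+1))) (h i hi)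
          rw [Finset.sum_range_succ] at this
          simp only [map_add, map_sum, map_mul, killVar_self, zero_mul, add_zero, map_zero] at this
          refine Eq.trans ?_ this
          refine Finset.sum_congr rfl fun j hj => ?_
          rw [killVar_ne (hne j hj)])
      have hc : ∀ k, ∃ r, u k = C r := fun k => 
        ⟨_, (totalDegree_eq_zero_iff_eq_C).1 ((hu k).totalDegree_le.antisymm (Nat.zero_le _) |> fun h => by simpa using h)⟩
      have hz : ∀ k ≤ b, u k = 0 := by
        intro k hk
        obtain ⟨r, hr⟩ := hc k
        have := key k (by omega)
        simp only [hr] at this ⊢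
        simpa [killVar] using this
      intro k hk
      rcases Nat.lt_or_ge b k with h1 | h1
      · obtain rfl : k = b + 1 := by omega
        have := h 0 le_rfl
        rw [Finset.sum_range_succ, Finset.sum_eq_zero] at this
        · simpa [X_ne_zero] using this
        · intro j hj
          rw [hz _ (by simp at hj; omega), mul_zero]
      · exact hz k h1
    | succ a iha =>
      have key := ihb (a+1) he' (fun k => killVar (e (b+1)) (u k))
        (fun k => homog_subst _ _ (hu k)) (by
          intro i hi
          have := congrArg (killVar (e (b+1))) (h i hi)
          rw [Finset.sum_range_succ] at this
          simp only [map_add, map_sum, map_mul, killVar_self, zero_mul, add_zero, map_zero] at this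
          refine Eq.trans ?_ this
          refine Finset.sum_congr rfl fun j hj => ?_
          rw [killVar_ne (hne j hj)])
      have hw : ∀ k, ∃ w : MvPolynomial σ ℝ, w.IsHomogeneous a ∧ (k ≤ a + 1 + b → u k = X (e (b+1)) * w) := by
        intro k
        by_cases hk : k ≤ a + 1 + b
        · obtain ⟨w, h1, h2⟩ := exists_mul_of_subst (e (b+1)) (u k) (hu k) (key k hk)
          exact ⟨w, h1, fun _ => h2⟩
        · exact ⟨0, isHomogeneous_zero _ _ _, fun h => absurd h hk⟩
      choose w hw1 hw2 using hw
      have hz := iha w hw1 (by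
        intro i hi
        have h3 := h i (by omega)
        have : X (e (b+1)) * ∑ j ∈ Finset.range (b+1+1), X (e j) * w (i + j) = 0 := by
          rw [← h3, Finset.mul_sum]
          refine Finset.sum_congr rfl fun j hj => ?_
          rw [hw2 (i+j) (by simp at hj; omega)]; ring
        simpa [X_ne_zero] using this)
      have hz' : ∀ k ≤ a + 1 + b, u k = 0 := fun k hk => by
        rw [hw2 k hk, hz k (by omega), mul_zero]
      intro k hk
      rcases Nat.lt_or_ge (a+1+b) k with h1 | h1
      · obtain rfl : k = a + 1 + (b + 1) := by omega
        have := h (a+1) le_rfl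
        rw [Finset.sum_range_succ, Finset.sum_eq_zero] at this
        · simpa [X_ne_zero] using this
        · intro j hj
          rw [hz' _ (by simp at hj; omega), mul_zero]
      · exact hz' k h1

lemma toeplitz_two_finish [DecidableEq σ] (e : ℕ → σ) (a b : ℕ) (he : Set.InjOn e (Set.Iic (b+1)))
    (u : ℕ → ℕ → MvPolynomial σ ℝ) (hu : ∀ k l, (u k l).IsHomogeneous a)
    (hs : ∀ k l, u k l = u l k)
    (h : ∀ i ≤ a, ∀ i' ≤ a, ∑ j ∈ Finset.range (b+1+1), ∑ j' ∈ Finset.range (b+1+1),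
      X (e j) * X (e j') * u (i + j) (i' + j') = 0)
    (hz : ∀ k ≤ a + b, ∀ l ≤ a + b, u k l = 0) :
    ∀ k ≤ a + (b + 1), ∀ l ≤ a + (b + 1), u k l = 0 := by
  have key := toeplitz_one e a (b+1) he
    (fun k => if k = a + (b + 1) then C (1/2) * u k k else u (a + (b+1)) k) (by
      intro k
      split_ifs
      · simpa using (isHomogeneous_C σ (1/2 : ℝ)).mul (hu k k)
      · exact hu _ _) (by
      intro q hq
      have h1 := h a le_rfl q hq
      rw [Finset.sum_range_succ] at h1
      rcases Nat.lt_or_ge q a with hqa | hqa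
      · rw [Finset.sum_eq_zero, zero_add] at h1
        · have h2 : X (e (b+1)) * ∑ j ∈ Finset.range (b+1+1), X (e j) *
              (if q + j = a + (b + 1) then C (1/2) * u (q+j) (q+j) else u (a + (b+1)) (q+j)) = 0 := by
            rw [← h1, Finset.mul_sum]
            refine Finset.sum_congr rfl fun j hj => ?_
            rw [if_neg (by simp at hj; omega)]; ring
          simpa [X_ne_zero] using h2
        · intro j hj
          refine Finset.sum_eq_zero fun j' hj' => ?_
          rw [hz _ (by simp at hj; omega) _ (by simp at hj'; omega), mul_zero]
      · obtain rfl : q = a := by omega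
        have h3 : ∑ j ∈ Finset.range (b+1), ∑ j' ∈ Finset.range (b+1+1),
            X (e j) * X (e j') * u (q + j) (q + j') =
            X (e (b+1)) * ∑ j ∈ Finset.range (b+1), X (e j) * u (q + (b+1)) (q+j) := by
          rw [Finset.mul_sum]
          refine Finset.sum_congr rfl fun j hj => ?_
          rw [Finset.sum_range_succ, Finset.sum_eq_zero, zero_add, hs]
          · ring
          · intro j' hj'
            rw [hz _ (by simp at hj; omega) _ (by simp at hj'; omega), mul_zero]
        have h2 : C 2 * X (e (b+1)) * ∑ j ∈ Finset.range (b+1+1), X (e j) *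
              (if q + j = q + (b + 1) then C (1/2) * u (q+j) (q+j) else u (q + (b+1)) (q+j)) = 0 := by
          rw [← h1, h3, Finset.sum_range_succ _ (b+1), Finset.sum_range_succ _ (b+1), if_pos rfl]
          have h4 : ∑ j ∈ Finset.range (b+1), X (e j) *
              (if q + j = q + (b + 1) then C (1/2) * u (q+j) (q+j) else u (q + (b+1)) (q+j)) =
              ∑ j ∈ Finset.range (b+1), X (e j) * u (q + (b+1)) (q+j) := by
            refine Finset.sum_congr rfl fun j hj => ?_
            rw [if_neg (by simp at hj; omega)]
          have h5 : ∑ j ∈ Finset.range (b+1), X (e (b+1)) * X (e j) * u (q + (b+1)) (q+j) =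
              X (e (b+1)) * ∑ j ∈ Finset.range (b+1), X (e j) * u (q + (b+1)) (q+j) := by
            rw [Finset.mul_sum]
            exact Finset.sum_congr rfl fun j hj => by ring
          rw [h4, h5]
          have h6 : (C 2 : MvPolynomial σ ℝ) * C (1/2) = 1 := by rw [← C_mul]; norm_num
          have h7 : (C 2 : MvPolynomial σ ℝ) = 1 + 1 := by
            rw [← C_1, ← C_add]; norm_num
          linear_combination (X (e (b+1))) * X (e (b+1)) * u (q + (b+1)) (q + (b+1)) * h6 +
            X (e (b+1)) * (∑ j ∈ Finset.range (b+1), X (e j) * u (q + (b+1)) (q+j)) * h7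
        simpa [X_ne_zero] using h2)
  have hm : ∀ l ≤ a + (b+1), u (a + (b+1)) l = 0 := by
    intro l hl
    have := key l hl
    split_ifs at this with hh
    · subst hh; simpa using this
    · exact this
  intro k hk l hl
  by_cases h1 : k = a + (b+1)
  · rw [h1]; exact hm l hl
  by_cases h2 : l = a + (b+1)
  · rw [h2, hs]; exact hm k hk
  exact hz k (by omega) l (by omega)

lemma toeplitz_two [DecidableEq σ] (e : ℕ → σ) (a b : ℕ) (he : Set.InjOn e (Set.Iic b))
    (u : ℕ → ℕ → MvPolynomial σ ℝ) (hu : ∀ k l, (u k l).IsHomogeneous a)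
    (hs : ∀ k l, u k l = u l k)
    (h : ∀ i ≤ a, ∀ i' ≤ a, ∑ j ∈ Finset.range (b+1), ∑ j' ∈ Finset.range (b+1),
      X (e j) * X (e j') * u (i + j) (i' + j') = 0) :
    ∀ k ≤ a + b, ∀ l ≤ a + b, u k l = 0 := by
  induction b generalizing a u with
  | zero =>
    intro k hk l hl
    have := h k (by omega) l (by omega)
    simpa [X_ne_zero] using this
  | succ b ihb =>
    have he' : Set.InjOn e (Set.Iic b) := he.mono (Set.Iic_subset_Iic.2 (by omega))
    have hne : ∀ j ∈ Finset.range (b+1), e j ≠ e (b+1) := by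
      intro j hj hh
      have := he (by simp at hj ⊢; omega) (by simp) hh
      simp at hj; omega
    have keyg : ∀ a (u : ℕ → ℕ → MvPolynomial σ ℝ), (∀ k l, (u k l).IsHomogeneous a) →
      (∀ k l, u k l = u l k) →
      (∀ i ≤ a, ∀ i' ≤ a, ∑ j ∈ Finset.range (b+1+1), ∑ j' ∈ Finset.range (b+1+1),
        X (e j) * X (e j') * u (i + j) (i' + j') = 0) →
      ∀ k ≤ a + b, ∀ l ≤ a + b, killVar (e (b+1)) (u k l) = 0 := by
      intro a u hu hs h
      refine ihb a he' (fun k l => killVar (e (b+1)) (u k l))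
        (fun k l => homog_subst _ _ (hu k l)) (fun k l => by rw [hs]) ?_
      intro i hi i' hi'
      have := congrArg (killVar (e (b+1))) (h i hi i' hi')
      rw [Finset.sum_range_succ] at this
      simp only [map_add, map_sum, map_mul, killVar_self, zero_mul, add_zero, map_zero,
        Finset.sum_const_zero] at this
      refine Eq.trans ?_ this
      refine Finset.sum_congr rfl fun j hj => ?_
      rw [Finset.sum_range_succ _ (b+1), killVar_self]
      simp only [mul_zero, zero_mul, add_zero]
      refine Finset.sum_congr rfl fun j' hj' => ?_
      rw [killVar_ne (hne j hj), killVar_ne (hne j' hj')]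
    induction a generalizing u with
    | zero =>
      have key := keyg 0 u hu hs h
      refine toeplitz_two_finish e 0 b he u hu hs h ?_
      intro k hk l hl
      obtain ⟨r, hr⟩ : ∃ r, u k l = C r :=
        ⟨_, (totalDegree_eq_zero_iff_eq_C).1 (Nat.le_zero.1 (hu k l).totalDegree_le)⟩
      have := key k hk l hl
      rw [hr] at this ⊢
      simpa [killVar] using this
    | succ a iha =>
      have key := keyg (a+1) u hu hs h
      refine toeplitz_two_finish e (a+1) b he u hu hs h ?_
      have hw : ∀ k l, ∃ w : MvPolynomial σ ℝ, w.IsHomogeneous a ∧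
          (k ≤ a + 1 + b → l ≤ a + 1 + b → u k l = X (e (b+1)) * w) := by
        intro k l
        by_cases hk : k ≤ a + 1 + b ∧ l ≤ a + 1 + b
        · obtain ⟨w, h1, h2⟩ := exists_mul_of_subst (e (b+1)) (u k l) (hu k l) (key k hk.1 l hk.2)
          exact ⟨w, h1, fun _ _ => h2⟩
        · exact ⟨0, isHomogeneous_zero _ _ _, fun h h' => absurd ⟨h, h'⟩ hk⟩
      choose w hw1 hw2 using hw
      have hz := iha (fun k l => C (1/2) * (w k l + w l k)) (fun k l => by
          simpa using (isHomogeneous_C σ (1/2 : ℝ)).mul ((hw1 k l).add (hw1 l k)))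
          (fun k l => by rw [add_comm]) (by
        intro i hi i' hi'
        have h3 := h i (by omega) i' (by omega)
        have : X (e (b+1)) * ∑ j ∈ Finset.range (b+1+1), ∑ j' ∈ Finset.range (b+1+1),
            X (e j) * X (e j') * (C (1/2) * (w (i + j) (i' + j') + w (i' + j') (i + j))) = 0 := by
          rw [← h3, Finset.mul_sum]
          refine Finset.sum_congr rfl fun j hj => ?_
          rw [Finset.mul_sum]
          refine Finset.sum_congr rfl fun j' hj' => ?_
          have e1 := hw2 (i+j) (i'+j') (by simp at hj; omega) (by simp at hj'; omega)
          have e2 := hw2 (i'+j') (i+j) (by simp at hj'; omega) (by simp at hj; omega)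
          rw [hs] at e2
          have h6 : (C (1/2) : MvPolynomial σ ℝ) + C (1/2) = 1 := by rw [← C_add]; norm_num
          linear_combination -X (e j) * X (e j') * (C (1/2) * e1 + C (1/2) * e2) +
            X (e j) * X (e j') * u (i+j) (i'+j') * h6
        simpa [X_ne_zero] using this)
      intro k hk l hl
      have e1 := hw2 k l hk hl
      have e2 := hw2 l k hl hk
      rw [hs] at e2
      have h6 : (C (1/2) : MvPolynomial σ ℝ) + C (1/2) = 1 := by rw [← C_add]; norm_num
      linear_combination C (1/2) * e1 + C (1/2) * e2 + X (e (b+1)) * hz k (by omega) l (by omega)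
        - u k l * h6
end
open Module

lemma odd_root (p : Polynomial ℝ) (hm : p.Monic) (ho : Odd p.natDegree) : ∃ x, p.eval x = 0 := by
  have hd : 0 < p.degree := Polynomial.natDegree_pos_iff_degree_pos.1 ho.pos
  have h1 := p.tendsto_atTop_of_leadingCoeff_nonneg hd (by rw [hm]; norm_num)
  have hd2 : 0 < (p.comp (-Polynomial.X)).degree := by
    apply Polynomial.natDegree_pos_iff_degree_pos.1
    rw [Polynomial.natDegree_comp]; simpa using ho.pos
  have h2 := (p.comp (-Polynomial.X)).tendsto_atBot_of_leadingCoeff_nonpos hd2 (by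
    rw [Polynomial.leadingCoeff_comp (by simp)]
    simp [hm, ho.neg_one_pow])
  obtain ⟨y, hy⟩ := (h1.eventually (Filter.eventually_ge_atTop 0)).exists
  obtain ⟨z, hz⟩ := (h2.eventually (Filter.eventually_le_atBot 0)).exists
  obtain ⟨x, hx⟩ := mem_range_of_exists_le_of_exists_ge (f := fun x => p.eval x) p.continuous
    (c := 0) ⟨-z, by simpa using hz⟩ ⟨y, hy⟩
  exact ⟨x, hx⟩

lemma common_eigenvector {V ι : Type*} [AddCommGroup V] [Module ℝ V] [FiniteDimensional ℝ V]
    (ho : Odd (finrank ℝ V)) (Y : ι → End ℝ V) (hc : ∀ i j v, Y i (Y j v) = Y j (Y i v)) :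
    ∃ v : V, v ≠ 0 ∧ ∃ l : ι → ℝ, ∀ i, Y i v = l i • v := by
  classical
  have hex : ∃ n, ∃ W : Submodule ℝ V, finrank ℝ W = n ∧ Odd n ∧ ∀ i, ∀ v ∈ W, Y i v ∈ W :=
    ⟨_, ⊤, finrank_top ℝ V, ho, fun _ _ _ => trivial⟩
  obtain ⟨W, hWn, hWo, hWi⟩ := Nat.find_spec hex
  have hmin : ∀ W' : Submodule ℝ V, W' ≤ W → Odd (finrank ℝ W') → (∀ i, ∀ v ∈ W', Y i v ∈ W') →
      finrank ℝ W' = finrank ℝ W := by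
    intro W' hle hodd hinv
    have h1 := Nat.find_min' hex ⟨W', rfl, hodd, hinv⟩
    have h2 := Submodule.finrank_mono hle
    omega
  rw [← hWn] at hWo
  have hscal : ∀ i, ∃ μ : ℝ, ∀ v ∈ W, Y i v = μ • v := by
    intro i
    let Z : End ℝ W := (Y i).restrict (hWi i)
    obtain ⟨μ, hμ⟩ := odd_root Z.charpoly Z.charpoly_monic (by rw [LinearMap.charpoly_natDegree]; exact hWo)
    have hev : Z.HasEigenvalue μ := by
      rw [Module.End.hasEigenvalue_iff_isRoot_charpoly]; exact hμ
    let K : Submodule ℝ V := (LinearMap.ker (Z - algebraMap ℝ (End ℝ W) μ)).map W.subtype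
    let R : Submodule ℝ V := (LinearMap.range (Z - algebraMap ℝ (End ℝ W) μ)).map W.subtype
    have hsum := LinearMap.finrank_range_add_finrank_ker (Z - algebraMap ℝ (End ℝ W) μ)
    have hK : finrank ℝ K = finrank ℝ (LinearMap.ker (Z - algebraMap ℝ (End ℝ W) μ)) :=
      Submodule.finrank_map_subtype_eq _ _
    have hR : finrank ℝ R = finrank ℝ (LinearMap.range (Z - algebraMap ℝ (End ℝ W) μ)) :=
      Submodule.finrank_map_subtype_eq _ _
    have hKpos : 0 < finrank ℝ K := by
      rw [hK]
      obtain ⟨v, hv⟩ := hev.exists_hasEigenvector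
      have : LinearMap.ker (Z - algebraMap ℝ (End ℝ W) μ) ≠ ⊥ := by
        intro hb
        have h3 : v ∈ LinearMap.ker (Z - algebraMap ℝ (End ℝ W) μ) := by
          rw [LinearMap.mem_ker]
          simp [hv.apply_eq_smul]
        rw [hb] at h3
        exact hv.2 (by simpa using h3)
      exact Submodule.one_le_finrank_iff.2 this
    have hKW : K ≤ W := Submodule.map_subtype_le _ _
    have hRW : R ≤ W := Submodule.map_subtype_le _ _
    have hKmem : ∀ v, v ∈ K ↔ v ∈ W ∧ Y i v = μ • v := by
      intro v
      constructor
      · rintro ⟨w, hw, rfl⟩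
        refine ⟨w.2, ?_⟩
        have h4 : Z w - μ • w = 0 := by simpa using hw
        have := congrArg Subtype.val (sub_eq_zero.1 h4)
        exact this
      · rintro ⟨hv, h5⟩
        refine ⟨⟨v, hv⟩, ?_, rfl⟩
        have : Z ⟨v, hv⟩ = μ • ⟨v, hv⟩ := Subtype.ext h5
        simp [this]
    have hKi : ∀ j, ∀ v ∈ K, Y j v ∈ K := by
      intro j v hv
      rw [hKmem] at hv ⊢
      exact ⟨hWi j v hv.1, by rw [hc, hv.2, map_smul]⟩
    have hRmem : ∀ v, v ∈ R ↔ ∃ w ∈ W, Y i w - μ • w = v := by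
      intro v
      constructor
      · rintro ⟨w, ⟨w', rfl⟩, rfl⟩
        exact ⟨w', w'.2, rfl⟩
      · rintro ⟨w, hw, rfl⟩
        exact ⟨_, ⟨⟨w, hw⟩, rfl⟩, rfl⟩
    have hRi : ∀ j, ∀ v ∈ R, Y j v ∈ R := by
      intro j v hv
      rw [hRmem] at hv ⊢
      obtain ⟨w, hw, rfl⟩ := hv
      exact ⟨Y j w, hWi j w hw, by rw [map_sub, map_smul, hc]⟩
    rcases Nat.even_or_odd (finrank ℝ K) with hKe | hKo
    · have hRo : Odd (finrank ℝ R) := by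
        rw [hR]; rw [hK] at hKe
        rw [← hsum] at hWo
        exact (Nat.odd_add.1 hWo).2 hKe
      have := hmin R hRW hRo hRi
      omega
    · have h6 := hmin K hKW hKo hKi
      have h7 : K = W := Submodule.eq_of_le_of_finrank_eq hKW h6
      refine ⟨μ, fun v hv => ?_⟩
      rw [← h7] at hv
      exact ((hKmem v).1 hv).2
  choose l hl using hscal
  have hne : W ≠ ⊥ := by
    intro h
    rw [h] at hWo
    simp at hWo
  obtain ⟨v, hv, hv0⟩ := Submodule.exists_mem_ne_zero_of_ne_bot hne
  exact ⟨v, hv0, l, fun i => hl i v hv⟩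

lemma generic_injective {U W : Type*} [AddCommGroup U] [Module ℝ U] [FiniteDimensional ℝ U]
    [AddCommGroup W] [Module ℝ W] (A B C : U →ₗ[ℝ] W) (hC : Function.Injective C) :
    ∃ P : Polynomial ℝ, P ≠ 0 ∧ ∀ t : ℝ, P.eval t ≠ 0 →
      Function.Injective ((1 - t)^2 • A + (t * (1 - t)) • B + t^2 • C : U →ₗ[ℝ] W) := by
  classical
  obtain ⟨g, hg⟩ := LinearMap.exists_leftInverse_of_injective C (LinearMap.ker_eq_bot.2 hC)
  let bs := Module.finBasis ℝ U
  let M : (U →ₗ[ℝ] W) → Matrix (Fin (finrank ℝ U)) (Fin (finrank ℝ U)) ℝ :=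
    fun T => LinearMap.toMatrix bs bs (g ∘ₗ T)
  let Q : Matrix (Fin (finrank ℝ U)) (Fin (finrank ℝ U)) (Polynomial ℝ) := Matrix.of fun i j =>
    (1 - Polynomial.X)^2 * Polynomial.C (M A i j) + Polynomial.X * (1 - Polynomial.X) * Polynomial.C (M B i j)
      + Polynomial.X^2 * Polynomial.C (M C i j)
  have hQ : ∀ t : ℝ, Q.det.eval t = LinearMap.det (g ∘ₗ ((1 - t)^2 • A + (t * (1 - t)) • B + t^2 • C)) := by
    intro t
    rw [← LinearMap.det_toMatrix bs, ← Polynomial.coe_evalRingHom, RingHom.map_det]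
    congr 1
    ext i j
    simp [Q, M, LinearMap.comp_add, LinearMap.comp_smul]
    ring
  refine ⟨Q.det, ?_, ?_⟩
  · intro h0
    have := hQ 1
    rw [h0] at this
    simp [hg] at this
  · intro t ht
    rw [hQ] at ht
    have h2 : Function.Injective (g ∘ₗ ((1 - t)^2 • A + (t * (1 - t)) • B + t^2 • C)) :=
      (LinearMap.equivOfDetNeZero _ ht).injective
    rw [LinearMap.coe_comp] at h2
    exact h2.of_comp

lemma finrank_homog (a b : ℕ) :
    finrank ℝ (MvPolynomial.homogeneousSubmodule (Fin (b+1)) ℝ a) = (a + b).choose a := by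
  rw [MvPolynomial.homogeneousSubmodule_eq_finsupp_supported]
  have hset : {d : Fin (b+1) →₀ ℕ | d.degree = a} =
      ((Finset.univ : Finset (Fin (b+1))).finsuppAntidiag a : Set (Fin (b+1) →₀ ℕ)) := by
    ext d
    simp [Finset.mem_finsuppAntidiag, Finsupp.degree_eq_sum]
  rw [hset]
  rw [LinearEquiv.finrank_eq (AddMonoidAlgebra.supportedEquivFinsupp _), Module.finrank_finsupp_self]
  simp [Finset.card_finsuppAntidiag_nat_eq_choose]
  congr 1
  omega

/-- Homogeneous polynomials of degree `a` in `b+1` variables. -/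
abbrev HP (b a : ℕ) : Submodule ℝ (MvPolynomial (Fin (b+1)) ℝ) :=
  MvPolynomial.homogeneousSubmodule (Fin (b+1)) ℝ a

/-- Linear form with given coefficients. -/
noncomputable def linForm (b : ℕ) : (Fin (b+1) → ℝ) →ₗ[ℝ] MvPolynomial (Fin (b+1)) ℝ :=
  ∑ j, (LinearMap.proj j).smulRight (MvPolynomial.X j)

lemma linForm_apply (b : ℕ) (f : Fin (b+1) → ℝ) : linForm b f = ∑ j, f j • MvPolynomial.X j := by
  simp [linForm]

lemma linForm_homog (b : ℕ) (f : Fin (b+1) → ℝ) : (linForm b f).IsHomogeneous 1 := by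
  rw [linForm_apply, ← MvPolynomial.mem_homogeneousSubmodule]
  refine Submodule.sum_mem _ fun j _ => Submodule.smul_mem _ _ ?_
  exact MvPolynomial.isHomogeneous_X _ _

/-- Coefficient arrays. -/
abbrev Coef (a b : ℕ) := Fin (a+b+1) → Fin (a+1) → Fin (b+1) → ℝ

/-- First linear map. -/
noncomputable def mapOne {a b : ℕ} (c : Coef a b) :
    (Fin (a+b+1) → HP b a) →ₗ[ℝ] (Fin (a+1) → HP b (a+1)) :=
  LinearMap.pi fun p => LinearMap.codRestrict (HP b (a+1))
    (∑ k, (LinearMap.mulLeft ℝ (linForm b (c k p))) ∘ₗ (HP b a).subtype ∘ₗ LinearMap.proj k) (by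
      intro u
      simp only [LinearMap.sum_apply, LinearMap.comp_apply]
      refine Submodule.sum_mem _ fun k _ => ?_
      have := (linForm_homog b (c k p)).mul (u k).2
      rw [add_comm a 1]
      exact this)

lemma mapOne_apply {a b : ℕ} (c : Coef a b) (u : Fin (a+b+1) → HP b a) (p : Fin (a+1)) :
    ((mapOne c u p : HP b (a+1)) : MvPolynomial (Fin (b+1)) ℝ) = ∑ k, linForm b (c k p) * (u k : MvPolynomial (Fin (b+1)) ℝ) := by
  simp [mapOne]

/-- Symmetric arrays. -/
def symArr (a b : ℕ) : Submodule ℝ (Fin (a+b+1) → Fin (a+b+1) → HP b a) where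
  carrier := {u | ∀ k l, u k l = u l k}
  add_mem' := by
    intro u v hu hv k l
    simp only [Pi.add_apply, hu k l, hv k l]
  zero_mem' := by intro k l; rfl
  smul_mem' := by
    intro r u hu k l
    simp only [Pi.smul_apply, hu k l]

/-- Second linear map. -/
noncomputable def mapTwo {a b : ℕ} (c c' : Coef a b) :
    symArr a b →ₗ[ℝ] (Fin (a+1) → Fin (a+1) → MvPolynomial (Fin (b+1)) ℝ) :=
  LinearMap.pi fun p => LinearMap.pi fun q =>
    ∑ k, ∑ l, (LinearMap.mulLeft ℝ (linForm b (c k p) * linForm b (c' l q))) ∘ₗ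
      (HP b a).subtype ∘ₗ LinearMap.proj l ∘ₗ LinearMap.proj k ∘ₗ (symArr a b).subtype

lemma mapTwo_apply {a b : ℕ} (c c' : Coef a b) (u : symArr a b) (p q : Fin (a+1)) :
    mapTwo c c' u p q = ∑ k, ∑ l, linForm b (c k p) * linForm b (c' l q) *
      (u.1 k l : MvPolynomial (Fin (b+1)) ℝ) := by
  simp [mapTwo, mul_assoc]

/-- Toeplitz coefficients. -/
def toep (a b : ℕ) : Coef a b := fun k i j => if (i : ℕ) + j = k then 1 else 0

lemma toep_sum (a b : ℕ) (p : Fin (a+1)) (w : ℕ → MvPolynomial (Fin (b+1)) ℝ) :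
    ∑ k : Fin (a+b+1), linForm b (toep a b k p) * w k =
      ∑ j ∈ Finset.range (b+1), MvPolynomial.X (Fin.ofNat (b+1) j) * w (p + j) := by
  rw [Finset.sum_range]
  simp only [linForm_apply, Finset.sum_mul]
  rw [Finset.sum_comm]
  refine Finset.sum_congr rfl fun j _ => ?_
  have hlt : (p : ℕ) + j < a + b + 1 := by omega
  rw [Finset.sum_eq_single ⟨(p : ℕ) + j, hlt⟩]
  · simp [toep]
  · intro k _ hk
    have : ¬ ((p : ℕ) + j = k) := fun h => hk (Fin.ext h.symm)
    simp [toep, this]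
  · simp

lemma ofNat_injOn (b : ℕ) : Set.InjOn (fun j => Fin.ofNat (b+1) j) (Set.Iic b) := by
  intro x hx y hy h
  have h1 := congrArg Fin.val h
  simp only [Fin.val_ofNat] at h1
  rw [Nat.mod_eq_of_lt (Nat.lt_succ_of_le hx), Nat.mod_eq_of_lt (Nat.lt_succ_of_le hy)] at h1
  exact h1

lemma mapOne_toep (a b : ℕ) : Function.Injective (mapOne (toep a b)) := by
  rw [injective_iff_map_eq_zero]
  intro u hu
  let w : ℕ → MvPolynomial (Fin (b+1)) ℝ := fun k => if h : k < a+b+1 then (u ⟨k, h⟩ : MvPolynomial (Fin (b+1)) ℝ) else 0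
  have hw : ∀ k : Fin (a+b+1), (u k : MvPolynomial (Fin (b+1)) ℝ) = w k := by
    intro k; simp only [w, k.2, dif_pos]
  have key := toeplitz_one (fun j => Fin.ofNat (b+1) j) a b (ofNat_injOn b) w (by
    intro k
    by_cases h : k < a+b+1
    · simp only [w, h, dif_pos]; exact (u ⟨k, h⟩).2
    · simp only [w, h, dif_neg, not_false_eq_true]; exact MvPolynomial.isHomogeneous_zero _ _ _) (by
    intro i hi
    have h1 := mapOne_apply (toep a b) u ⟨i, Nat.lt_succ_of_le hi⟩
    rw [hu] at h1
    simp only [hw] at h1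
    rw [toep_sum] at h1
    exact h1.symm)
  ext1 k
  apply Subtype.ext
  rw [hw]
  exact key k (Nat.lt_succ_iff.1 k.2)

lemma mapTwo_toep (a b : ℕ) : Function.Injective (mapTwo (toep a b) (toep a b)) := by
  rw [injective_iff_map_eq_zero]
  intro u hu
  let w : ℕ → ℕ → MvPolynomial (Fin (b+1)) ℝ := fun k l =>
    if h : k < a+b+1 ∧ l < a+b+1 then (u.1 ⟨k, h.1⟩ ⟨l, h.2⟩ : MvPolynomial (Fin (b+1)) ℝ) else 0
  have hw : ∀ k l : Fin (a+b+1), (u.1 k l : MvPolynomial (Fin (b+1)) ℝ) = w k l := by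
    intro k l; simp only [w, dif_pos (And.intro k.2 l.2)]
  have key := toeplitz_two (fun j => Fin.ofNat (b+1) j) a b (ofNat_injOn b) w (by
    intro k l
    by_cases h : k < a+b+1 ∧ l < a+b+1
    · simp only [w, dif_pos h]; exact (u.1 ⟨k, h.1⟩ ⟨l, h.2⟩).2
    · simp only [w, dif_neg h]; exact MvPolynomial.isHomogeneous_zero _ _ _) (by
    intro k l
    by_cases h : k < a+b+1 ∧ l < a+b+1
    · simp only [w, dif_pos h, dif_pos h.symm]; rw [u.2 ⟨k, h.1⟩ ⟨l, h.2⟩]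
    · simp only [w, dif_neg h, dif_neg (fun h' => h (And.symm h'))]) (by
    intro i hi i' hi'
    have h1 := mapTwo_apply (toep a b) (toep a b) u ⟨i, Nat.lt_succ_of_le hi⟩ ⟨i', Nat.lt_succ_of_le hi'⟩
    rw [hu] at h1
    simp only [hw, mul_assoc, ← Finset.mul_sum] at h1
    simp only [toep_sum a b ⟨i', Nat.lt_succ_of_le hi'⟩] at h1
    rw [toep_sum a b ⟨i, Nat.lt_succ_of_le hi⟩ (fun k => ∑ j ∈ Finset.range (b+1), MvPolynomial.X (Fin.ofNat (b+1) j) * w k (i' + j))] at h1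
    simp only [mul_assoc, ← Finset.mul_sum]
    exact h1.symm)
  ext k l : 4
  rw [hw]
  rw [key k (Nat.lt_succ_iff.1 k.2) l (Nat.lt_succ_iff.1 l.2)]
  rfl

instance (b a : ℕ) : FiniteDimensional ℝ (HP b a) :=
  FiniteDimensional.of_finrank_pos (by
    rw [finrank_homog]; exact Nat.choose_pos (Nat.le_add_right a b))

lemma core {a b : ℕ} (ho : Odd ((a+b).choose a)) (c : Coef a b)
    (h1 : Function.Injective (mapOne c)) (h2 : Function.Injective (mapTwo c c)) :
    ∃ r : Fin (a+1) → ℝ, ∃ s : Fin (b+1) → ℝ, r ≠ 0 ∧ s ≠ 0 ∧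
      ∀ k, k ≠ Fin.last (a+b) → ∑ i, ∑ j, c k i j * r i * s j = 0 := by
  classical
  have hdim : finrank ℝ (Fin (a+b+1) → HP b a) = finrank ℝ (Fin (a+1) → HP b (a+1)) := by
    rw [Module.finrank_pi_fintype, Module.finrank_pi_fintype]
    simp only [finrank_homog, Finset.sum_const, Finset.card_univ, Fintype.card_fin, smul_eq_mul]
    have := Nat.add_one_mul_choose_eq (a+b) a
    rw [this, mul_comm]
    congr 2
    omega
  let E := LinearEquiv.ofBijective (mapOne c)
    ⟨h1, (LinearMap.injective_iff_surjective_of_finrank_eq_finrank hdim).1 h1⟩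
  -- multiplication by a variable
  let mx : Fin (b+1) → HP b a →ₗ[ℝ] HP b (a+1) := fun j =>
    LinearMap.codRestrict (HP b (a+1)) ((LinearMap.mulLeft ℝ (MvPolynomial.X j)) ∘ₗ (HP b a).subtype) (by
      intro v
      have := (MvPolynomial.isHomogeneous_X ℝ j).mul v.2
      rw [add_comm a 1]
      exact this)
  have hmx : ∀ j v, ((mx j v : HP b (a+1)) : MvPolynomial (Fin (b+1)) ℝ) = MvPolynomial.X j * (v : MvPolynomial (Fin (b+1)) ℝ) := by
    intro j v; simp [mx]
  let U : Fin (a+1) → Fin (b+1) → Fin (a+b+1) → End ℝ (HP b a) := fun i j k =>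
    LinearMap.proj k ∘ₗ E.symm.toLinearMap ∘ₗ LinearMap.single ℝ _ i ∘ₗ mx j
  have hU : ∀ i j k v, U i j k v = E.symm (Pi.single i (mx j v)) k := fun i j k v => rfl
  have key : ∀ i j v p, ∑ k, linForm b (c k p) * (U i j k v : MvPolynomial (Fin (b+1)) ℝ) =
      if i = p then MvPolynomial.X j * (v : MvPolynomial (Fin (b+1)) ℝ) else 0 := by
    intro i j v p
    simp only [hU]
    rw [← mapOne_apply]
    have : mapOne c (E.symm (Pi.single i (mx j v))) = Pi.single i (mx j v) :=
      E.apply_symm_apply _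
    rw [this]
    by_cases hip : i = p
    · subst hip; simp [hmx]
    · rw [Pi.single_eq_of_ne (Ne.symm hip)]; simp [hip]
  have hsum : ∀ k0 k v, ∑ i, ∑ j, c k0 i j • U i j k v = if k = k0 then v else 0 := by
    intro k0 k v
    have e1 : E (Pi.single k0 v) = ∑ i, ∑ j, c k0 i j • Pi.single i (mx j v) := by
      ext p : 2
      have : (E (Pi.single k0 v) p : MvPolynomial (Fin (b+1)) ℝ) =
        ((mapOne c (Pi.single k0 v) p : HP b (a+1)) : MvPolynomial (Fin (b+1)) ℝ) := rfl
      rw [this, mapOne_apply]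
      rw [Finset.sum_eq_single k0]
      · simp only [Finset.sum_apply, Pi.smul_apply]
        rw [Finset.sum_eq_single p]
        · simp [hmx, linForm_apply, Finset.sum_mul]
        · intro i _ hi
          simp [Pi.single_eq_of_ne (Ne.symm hi)]
        · simp
      · intro k _ hk
        simp [Pi.single_eq_of_ne hk]
      · simp
    have e2 : Pi.single k0 v = ∑ i, ∑ j, c k0 i j • E.symm (Pi.single i (mx j v)) := by
      have := congrArg E.symm e1
      simpa using this
    have e3 := congrFun e2 k
    simp only [Finset.sum_apply, Pi.smul_apply] at e3
    simp only [hU]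
    rw [← e3, Pi.single_apply]
  let uu : Fin (a+1) → Fin (b+1) → Fin (a+1) → Fin (b+1) → HP b a → symArr a b := fun i j i' j' v =>
    ⟨fun k l => U i' j' l (U i j k v) + U i' j' k (U i j l v), fun k l => add_comm _ _⟩
  have huu : ∀ i j i' j' v p q, mapTwo c c (uu i j i' j' v) p q =
      (if i' = q then (if i = p then MvPolynomial.X j' * MvPolynomial.X j * (v : MvPolynomial (Fin (b+1)) ℝ) else 0) else 0) +
      (if i' = p then (if i = q then MvPolynomial.X j' * MvPolynomial.X j * (v : MvPolynomial (Fin (b+1)) ℝ) else 0) else 0) := by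
    intro i j i' j' v p q
    rw [mapTwo_apply]
    have : ∀ k l, ((uu i j i' j' v).1 k l : MvPolynomial (Fin (b+1)) ℝ) =
      (U i' j' l (U i j k v) : MvPolynomial (Fin (b+1)) ℝ) + (U i' j' k (U i j l v) : MvPolynomial (Fin (b+1)) ℝ) := fun k l => rfl
    simp only [this, mul_add, Finset.sum_add_distrib]
    congr 1
    · simp only [mul_assoc, ← Finset.mul_sum, key]
      by_cases hq : i' = q
      · simp only [hq, if_true, mul_left_comm _ (MvPolynomial.X j'), ← Finset.mul_sum, key]
        split_ifs <;> simp
      · simp [hq]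
    · rw [Finset.sum_comm]
      simp only [mul_comm (linForm b (c _ p)) (linForm b (c _ q)), mul_assoc, ← Finset.mul_sum, key]
      by_cases hq : i' = p
      · simp only [hq, if_true, mul_left_comm _ (MvPolynomial.X j'), ← Finset.mul_sum, key]
        split_ifs <;> simp
      · simp [hq]
  let Y : Fin (a+1) × Fin (b+1) → End ℝ (HP b a) := fun x => U x.1 x.2 (Fin.last (a+b))
  have huY : ∀ i j i' j' v, (uu i j i' j' v).1 (Fin.last _) (Fin.last _) = (2:ℝ) • Y (i', j') (Y (i, j) v) := by
    intro i j i' j' v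
    rw [two_smul]
  have two_cancel : ∀ x y : HP b a, (2:ℝ) • x = (2:ℝ) • y → x = y := fun x y h =>
    smul_right_injective _ (two_ne_zero) h
  have hcomm : ∀ x y v, Y x (Y y v) = Y y (Y x v) := by
    rintro ⟨i, j⟩ ⟨i', j'⟩ v
    apply two_cancel
    rw [← huY, ← huY]
    have : uu i' j' i j v = uu i j i' j' v := by
      apply h2
      ext1 p; ext1 q
      rw [huu, huu, mul_comm (MvPolynomial.X j)]
      split_ifs <;> simp
    rw [this]
  have hswap : ∀ i j i' j' v, Y (i', j') (Y (i, j) v) = Y (i', j) (Y (i, j') v) := by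
    intro i j i' j' v
    apply two_cancel
    rw [← huY, ← huY]
    have : uu i j i' j' v = uu i j' i' j v := by
      apply h2
      ext1 p; ext1 q
      rw [huu, huu]
      rw [mul_comm (MvPolynomial.X j')]
    rw [this]
  obtain ⟨v, hv, l, hl⟩ := common_eigenvector (V := HP b a) (by rw [finrank_homog]; exact ho) Y hcomm
  have vcancel : ∀ x y : ℝ, x • v = y • v → x = y := fun x y h => smul_left_injective ℝ hv h
  have hl2 : ∀ i j i' j', l (i, j) * l (i', j') = l (i, j') * l (i', j) := by
    intro i j i' j'
    have := hswap i j i' j' v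
    rw [hl, map_smul, hl, hl, map_smul, hl, smul_smul, smul_smul] at this
    exact vcancel _ _ this
  have hl1 : ∀ k0, ∑ i, ∑ j, c k0 i j * l (i, j) = if Fin.last (a+b) = k0 then 1 else 0 := by
    intro k0
    have := hsum k0 (Fin.last (a+b)) v
    have hl' : ∀ i j, U i j (Fin.last (a+b)) v = l (i, j) • v := fun i j => hl (i, j)
    simp only [hl', smul_smul, ← Finset.sum_smul] at this
    apply vcancel
    rw [this]
    split_ifs <;> simp
  have hne : ∃ i j, l (i, j) ≠ 0 := by
    by_contra hcon
    push Not at hcon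
    have := hl1 (Fin.last (a+b))
    simp [hcon] at this
  obtain ⟨i0, j0, h0⟩ := hne
  refine ⟨fun i => l (i, j0), fun j => l (i0, j), fun h => h0 (congrFun h i0), fun h => h0 (congrFun h j0), ?_⟩
  intro k hk
  have := hl1 k
  rw [if_neg (Ne.symm hk)] at this
  have h3 : ∀ i j, c k i j * l (i, j0) * l (i0, j) = c k i j * l (i, j) * l (i0, j0) := by
    intro i j
    rw [mul_assoc, hl2, mul_assoc]
  simp only [h3, ← Finset.sum_mul, this, zero_mul]

/-- Hopf-type non-existence theorem. -/
lemma hopf (a b : ℕ) (ho : Odd ((a+b).choose a)) (β : Fin (a+b) → Fin (a+1) → Fin (b+1) → ℝ)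
    (hβ : ∀ (r : Fin (a+1) → ℝ) (s : Fin (b+1) → ℝ),
      ∑ k, (∑ i, ∑ j, β k i j * r i * s j)^2 = (∑ i, r i ^ 2) * (∑ j, s j ^ 2)) : False := by
  classical
  let c1 : Coef a b := toep a b
  let c0 : Coef a b := Fin.lastCases (c1 (Fin.last (a+b))) β
  let ct : ℝ → Coef a b := fun t => (1 - t) • c0 + t • c1
  have e1 : ∀ t, mapOne (ct t) = (1 - t)^2 • mapOne c0 + (t * (1 - t)) • (mapOne c0 + mapOne c1) + t^2 • mapOne c1 := by
    intro t
    refine LinearMap.ext fun u => funext fun p => Subtype.ext ?_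
    rw [mapOne_apply]
    simp only [LinearMap.add_apply, LinearMap.smul_apply, Pi.add_apply, Pi.smul_apply, Submodule.coe_add,
      Submodule.coe_smul, mapOne_apply, ct, map_add, map_smul, Finset.smul_sum, ← Finset.sum_add_distrib]
    refine Finset.sum_congr rfl fun k _ => ?_
    simp only [MvPolynomial.smul_eq_C_mul, map_mul, map_pow, map_sub, map_one]
    ring
  have e2 : ∀ t, mapTwo (ct t) (ct t) = (1 - t)^2 • mapTwo c0 c0 + (t * (1 - t)) • (mapTwo c0 c1 + mapTwo c1 c0) + t^2 • mapTwo c1 c1 := by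
    intro t
    refine LinearMap.ext fun u => funext fun p => funext fun q => ?_
    rw [mapTwo_apply]
    simp only [LinearMap.add_apply, LinearMap.smul_apply, Pi.add_apply, Pi.smul_apply,
      mapTwo_apply, ct, map_add, map_smul, Finset.smul_sum, ← Finset.sum_add_distrib]
    refine Finset.sum_congr rfl fun k _ => Finset.sum_congr rfl fun l _ => ?_
    simp only [MvPolynomial.smul_eq_C_mul, map_mul, map_pow, map_sub, map_one]
    ring
  obtain ⟨P1, hP1, hI1⟩ := generic_injective (mapOne c0) (mapOne c0 + mapOne c1) (mapOne c1) (mapOne_toep a b)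
  obtain ⟨P2, hP2, hI2⟩ := generic_injective (U := symArr a b) (W := Fin (a+1) → Fin (a+1) → MvPolynomial (Fin (b+1)) ℝ) (mapTwo c0 c0) (mapTwo c0 c1 + mapTwo c1 c0) (mapTwo c1 c1) (mapTwo_toep a b)
  let N : ℝ := (a + b) * ((a+1) * (b+1))
  have hN : 0 ≤ N := by positivity
  have hpos : (0:ℝ) < 1 / (N + 2) := by positivity
  obtain ⟨t, ht, htn⟩ := (Set.Ioo_infinite hpos).exists_notMem_finset ((P1 * P2).roots.toFinset)
  rw [Multiset.mem_toFinset, Polynomial.mem_roots (mul_ne_zero hP1 hP2), Polynomial.IsRoot, Polynomial.eval_mul] at htn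
  have h1 := hI1 t (left_ne_zero_of_mul htn)
  have h2 := hI2 t (right_ne_zero_of_mul htn)
  rw [← e1] at h1
  rw [← e2] at h2
  obtain ⟨r, s, hr, hs, hz⟩ := core ho (ct t) h1 h2
  have hpr : 0 < ∑ i, r i ^ 2 := by
    obtain ⟨i, hi⟩ := Function.ne_iff.1 hr
    exact Finset.sum_pos' (fun _ _ => sq_nonneg _) ⟨i, Finset.mem_univ _, by have : r i ≠ 0 := hi; positivity⟩
  have hps : 0 < ∑ i, s i ^ 2 := by
    obtain ⟨i, hi⟩ := Function.ne_iff.1 hs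
    exact Finset.sum_pos' (fun _ _ => sq_nonneg _) ⟨i, Finset.mem_univ _, by have : s i ≠ 0 := hi; positivity⟩
  let D := (∑ i, r i ^ 2) * (∑ j, s j ^ 2)
  have hD : 0 < D := mul_pos hpr hps
  have hk : ∀ k : Fin (a+b), (1 - t) * (∑ i, ∑ j, β k i j * r i * s j) =
      - t * (∑ i, ∑ j, toep a b k.castSucc i j * r i * s j) := by
    intro k
    have := hz k.castSucc (Fin.castSucc_lt_last k).ne
    have h3 : ∀ i j, ct t k.castSucc i j * r i * s j =
        (1 - t) * (β k i j * r i * s j) + t * (toep a b k.castSucc i j * r i * s j) := by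
      intro i j
      simp only [ct, c0, c1, Pi.add_apply, Pi.smul_apply, smul_eq_mul, Fin.lastCases_castSucc]
      ring
    simp only [h3, Finset.sum_add_distrib, ← Finset.mul_sum] at this
    linarith
  have hψ : ∀ k : Fin (a+b), (∑ i, ∑ j, toep a b k.castSucc i j * r i * s j)^2 ≤ ((a+1) * (b+1)) * D := by
    intro k
    have hcs := Finset.sum_mul_sq_le_sq_mul_sq (Finset.univ : Finset (Fin (a+1) × Fin (b+1)))
      (fun x => toep a b k.castSucc x.1 x.2) (fun x => r x.1 * s x.2)
    have q1 : ∑ x : Fin (a+1) × Fin (b+1), (r x.1 * s x.2)^2 = D := by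
      rw [Fintype.sum_prod_type]
      simp only [D, mul_pow, Finset.sum_mul_sum]
    have q2 : ∑ x : Fin (a+1) × Fin (b+1), (toep a b k.castSucc x.1 x.2)^2 ≤ (a+1) * (b+1) := by
      calc _ ≤ ∑ x : Fin (a+1) × Fin (b+1), (1:ℝ) := by
            refine Finset.sum_le_sum fun x _ => ?_
            simp only [toep]; split_ifs <;> norm_num
        _ = _ := by simp
    rw [q1, Fintype.sum_prod_type] at hcs
    simp only [← mul_assoc] at hcs
    calc _ ≤ _ := hcs
      _ ≤ _ := by gcongr
  have hfin : (1 - t)^2 * D ≤ t^2 * (N * D) := by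
    have := hβ r s
    calc (1 - t)^2 * D = ∑ k : Fin (a+b), ((1 - t) * (∑ i, ∑ j, β k i j * r i * s j))^2 := by
          simp only [D, mul_pow, ← Finset.mul_sum, this]
      _ = ∑ k : Fin (a+b), t^2 * (∑ i, ∑ j, toep a b k.castSucc i j * r i * s j)^2 := by
          refine Finset.sum_congr rfl fun k _ => ?_
          rw [hk]; ring
      _ ≤ ∑ k : Fin (a+b), t^2 * (((a+1) * (b+1)) * D) := by
          refine Finset.sum_le_sum fun k _ => ?_
          have := hψ k
          gcongr
      _ = _ := by simp [N]; ring
  have ht0 : 0 < t := ht.1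
  have ht1 : t * (N + 2) < 1 := by
    have := ht.2
    rwa [lt_div_iff₀ (by positivity)] at this
  have hf2 : (1 - t)^2 ≤ t^2 * N := by
    rw [← mul_assoc (t^2)] at hfin
    exact le_of_mul_le_mul_right hfin hD
  have : t * (N + 1) < 1 - t := by linarith
  have h5 : (t * (N + 1))^2 < (1 - t)^2 := by
    apply pow_lt_pow_left₀ this (by positivity) (by norm_num)
  nlinarith [mul_nonneg (sq_nonneg t) hN, mul_nonneg (sq_nonneg t) (sq_nonneg N), sq_nonneg t]

/-- Signs of the entries of the design. -/
def sgn16 : Fin 16 → Fin 9 → ℤ :=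
  ![![1, 1, -1, -1, -1, -1, -1, -1, -1],
    ![1, 1, 1, 1, -1, 1, -1, -1, 1],
    ![1, 1, -1, 1, 1, 1, 1, -1, -1],
    ![1, 1, 1, -1, 1, 1, -1, 1, -1],
    ![1, 1, -1, -1, -1, 1, 1, 1, 1],
    ![1, 1, 1, -1, 1, -1, 1, -1, 1],
    ![1, 1, 1, 1, -1, -1, 1, 1, -1],
    ![1, 1, -1, 1, 1, -1, -1, 1, 1],
    ![1, -1, -1, -1, -1, -1, -1, -1, -1],
    ![1, -1, 1, 1, -1, 1, -1, -1, 1],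
    ![1, -1, -1, 1, 1, 1, 1, -1, -1],
    ![1, -1, 1, -1, 1, 1, -1, 1, -1],
    ![1, -1, -1, -1, -1, 1, 1, 1, 1],
    ![1, -1, 1, -1, 1, -1, 1, -1, 1],
    ![1, -1, 1, 1, -1, -1, 1, 1, -1],
    ![1, -1, -1, 1, 1, -1, -1, 1, 1]]

/-- Masks. -/
def mask16 : Fin 9 → Fin 16 := ![0, 8, 9, 10, 11, 12, 13, 14, 15]

lemma sgn16_sq : ∀ p c, sgn16 p c * sgn16 p c = 1 := by decide

lemma mask16_inv : ∀ (p : Fin 16) c, (p ^^^ mask16 c) ^^^ mask16 c = p := by decide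

lemma mask16_inv2 : ∀ (p : Fin 16) c d, ((p ^^^ mask16 c) ^^^ mask16 d) ^^^ mask16 c = p ^^^ mask16 d := by
  decide +kernel

lemma mask16_inv3 : ∀ (p : Fin 16) c d, ((p ^^^ mask16 c) ^^^ mask16 d) ^^^ mask16 c ^^^ mask16 d = p := by
  decide +kernel

lemma sgn16_anti : ∀ (p : Fin 16) c d, c ≠ d →
    sgn16 ((p ^^^ mask16 c) ^^^ mask16 d) c * sgn16 ((p ^^^ mask16 c) ^^^ mask16 d) d =
      - (sgn16 p c * sgn16 p d) := by
  decide +kernel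

lemma real16 (r : Fin 16 → ℝ) (c d : Fin 9) :
    ∑ p, ((sgn16 p c : ℝ) * r (p ^^^ mask16 c)) * ((sgn16 p d : ℝ) * r (p ^^^ mask16 d)) =
      if c = d then ∑ p, r p ^ 2 else 0 := by
  split_ifs with h
  · subst h
    have hinv : Function.Involutive (fun p : Fin 16 => p ^^^ mask16 c) := fun p => mask16_inv p c
    rw [← Equiv.sum_comp (Function.Involutive.toPerm _ hinv) (fun p => r p ^ 2)]
    refine Finset.sum_congr rfl fun p _ => ?_
    have : (sgn16 p c : ℝ) * sgn16 p c = 1 := by exact_mod_cast sgn16_sq p c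
    simp only [Function.Involutive.coe_toPerm]
    linear_combination (r (p ^^^ mask16 c))^2 * this
  · have hinv : Function.Involutive (fun p : Fin 16 => (p ^^^ mask16 c) ^^^ mask16 d) :=
      fun p => mask16_inv3 p c d
    have key := Equiv.sum_comp (Function.Involutive.toPerm _ hinv) (fun p =>
      ((sgn16 p c : ℝ) * r (p ^^^ mask16 c)) * ((sgn16 p d : ℝ) * r (p ^^^ mask16 d)))
    have h2 : ∀ p : Fin 16, (fun p => ((sgn16 p c : ℝ) * r (p ^^^ mask16 c)) * ((sgn16 p d : ℝ) * r (p ^^^ mask16 d)))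
        ((Function.Involutive.toPerm _ hinv) p) = - (((sgn16 p c : ℝ) * r (p ^^^ mask16 c)) * ((sgn16 p d : ℝ) * r (p ^^^ mask16 d))) := by
      intro p
      simp only [Function.Involutive.coe_toPerm]
      rw [mask16_inv2, mask16_inv]
      have : (sgn16 ((p ^^^ mask16 c) ^^^ mask16 d) c : ℝ) * sgn16 ((p ^^^ mask16 c) ^^^ mask16 d) d =
        - (sgn16 p c * sgn16 p d) := by exact_mod_cast sgn16_anti p c d h
      linear_combination (r (p ^^^ mask16 c)) * (r (p ^^^ mask16 d)) * this
    simp only [h2, Finset.sum_neg_distrib] at key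
    linarith

open Matrix in
lemma partA : ∃ A B : Fin 8 → Matrix (Fin 16) (Fin 9) ℂ,
      ∀ x : Fin 8 → ℂ,
        (∑ i, (x i • A i + (starRingEnd ℂ) (x i) • B i))ᴴ *
          (∑ i, (x i • A i + (starRingEnd ℂ) (x i) • B i)) =
        (∑ i, (Complex.normSq (x i) : ℂ)) • (1 : Matrix (Fin 9) (Fin 9) ℂ) := by
  classical
  let R : Fin (8+8) → Matrix (Fin 16) (Fin 9) ℂ := fun j => Matrix.of fun p c =>
    if p ^^^ mask16 c = j then (sgn16 p c : ℂ) else 0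
  refine ⟨fun i => (1/2 : ℂ) • (R (Fin.castAdd 8 i) - Complex.I • R (Fin.natAdd 8 i)),
    fun i => (1/2 : ℂ) • (R (Fin.castAdd 8 i) + Complex.I • R (Fin.natAdd 8 i)), fun x => ?_⟩
  let r : Fin (8+8) → ℝ := Fin.append (fun i => (x i).re) (fun i => (x i).im)
  have hG : ∑ i, (x i • ((1/2 : ℂ) • (R (Fin.castAdd 8 i) - Complex.I • R (Fin.natAdd 8 i))) +
      (starRingEnd ℂ) (x i) • ((1/2 : ℂ) • (R (Fin.castAdd 8 i) + Complex.I • R (Fin.natAdd 8 i)))) =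
      Matrix.of fun p c => (((sgn16 p c : ℝ) * r (p ^^^ mask16 c) : ℝ) : ℂ) := by
    have h1 : ∑ j, (r j : ℂ) • R j = Matrix.of fun p c => (((sgn16 p c : ℝ) * r (p ^^^ mask16 c) : ℝ) : ℂ) := by
      ext p c
      simp only [Matrix.sum_apply, Matrix.smul_apply, R, Matrix.of_apply, smul_eq_mul, mul_ite, mul_zero]
      rw [Finset.sum_ite_eq]
      simp [mul_comm]
    rw [← h1, Fin.sum_univ_add, ← Finset.sum_add_distrib]
    refine Finset.sum_congr rfl fun i _ => ?_
    simp only [r, Fin.append_left, Fin.append_right]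
    have e1 : (starRingEnd ℂ) (x i) = (x i).re - (x i).im * Complex.I := by
      apply Complex.ext <;> simp
    have e2 : x i = (x i).re + (x i).im * Complex.I := (Complex.re_add_im _).symm
    rw [e1]
    ext p c
    simp only [Matrix.add_apply, Matrix.smul_apply, Matrix.sub_apply, smul_eq_mul]
    linear_combination (1/2 * (R (Fin.castAdd 8 i) p c - Complex.I * R (Fin.natAdd 8 i) p c)) * e2 - (x i).im * R (Fin.natAdd 8 i) p c * Complex.I_sq
  rw [hG]
  ext c d
  have h := real16 r c d
  have hr : ∑ p, r p ^ 2 = ∑ i, Complex.normSq (x i) := by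
    refine (Fin.sum_univ_add (a := 8) (b := 8) (fun p => r p ^ 2)).trans ?_
    rw [← Finset.sum_add_distrib]
    refine Finset.sum_congr rfl fun i _ => ?_
    simp only [r, Fin.append_left, Fin.append_right, Complex.normSq_apply]
    ring
  rw [hr] at h
  simp only [Matrix.mul_apply, Matrix.conjTranspose_apply, Matrix.of_apply, Matrix.smul_apply, Matrix.one_apply,
    Complex.star_def, Complex.conj_ofReal, smul_eq_mul]
  have h' := congrArg (Complex.ofReal) h
  rw [Complex.ofReal_sum] at h'
  simp only [← Complex.ofReal_mul] at *
  rw [h']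
  split_ifs <;> simp

lemma hopf_types (a b : ℕ) (ho : Odd ((a+b).choose a)) {I J K : Type} [Fintype I] [Fintype J] [Fintype K]
    (hK : Fintype.card K = a + b) (hI : a + 1 ≤ Fintype.card I) (hJ : b + 1 ≤ Fintype.card J)
    (β : K → I → J → ℝ)
    (hβ : ∀ (r : I → ℝ) (s : J → ℝ),
      ∑ k, (∑ i, ∑ j, β k i j * r i * s j)^2 = (∑ i, r i ^ 2) * (∑ j, s j ^ 2)) : False := by
  classical
  obtain ⟨f⟩ : Nonempty (Fin (a+1) ↪ I) := Function.Embedding.nonempty_of_card_le (by simpa using hI)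
  obtain ⟨g⟩ : Nonempty (Fin (b+1) ↪ J) := Function.Embedding.nonempty_of_card_le (by simpa using hJ)
  let e : Fin (a+b) ≃ K := (Fintype.equivFinOfCardEq hK).symm
  have hf : ∀ (r : Fin (a+1) → ℝ) (F : I → ℝ → ℝ), (∀ i, F i 0 = 0) →
      ∑ i, F i (Function.extend f r 0 i) = ∑ i, F (f i) (r i) := by
    intro r F hF
    have h1 : ∑ i ∈ Finset.univ.map f, F i (Function.extend f r 0 i) = ∑ i, F i (Function.extend f r 0 i) := by
      apply Finset.sum_subset (Finset.subset_univ _)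
      intro i _ hi
      rw [Function.extend_apply' _ _ _ (by simpa using hi)]
      exact hF i
    rw [← h1, Finset.sum_map]
    simp [f.injective.extend_apply]
  have hg : ∀ (r : Fin (b+1) → ℝ) (F : J → ℝ → ℝ), (∀ i, F i 0 = 0) →
      ∑ i, F i (Function.extend g r 0 i) = ∑ i, F (g i) (r i) := by
    intro r F hF
    have h1 : ∑ i ∈ Finset.univ.map g, F i (Function.extend g r 0 i) = ∑ i, F i (Function.extend g r 0 i) := by
      apply Finset.sum_subset (Finset.subset_univ _)
      intro i _ hi
      rw [Function.extend_apply' _ _ _ (by simpa using hi)]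
      exact hF i
    rw [← h1, Finset.sum_map]
    simp [g.injective.extend_apply]
  apply hopf a b ho (fun k i j => β (e k) (f i) (g j))
  intro r s
  have h := hβ (Function.extend f r 0) (Function.extend g s 0)
  rw [hf r (fun _ y => y^2) (by simp), hg s (fun _ y => y^2) (by simp)] at h
  rw [← h, ← Equiv.sum_comp e]
  refine Finset.sum_congr rfl fun k _ => ?_
  congr 1
  rw [hf r (fun i y => ∑ j, β (e k) i j * y * Function.extend g s 0 j) (by simp)]
  refine Finset.sum_congr rfl fun i _ => ?_
  rw [hg s (fun j y => β (e k) (f i) j * r i * y) (by simp)]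

open Matrix in
lemma partB (x a b : ℕ) (hab : a + b = 4 * x) (ha : a + 1 ≤ 2 * x) (hb : b ≤ 17)
    (ho : Odd ((a+b).choose a)) :
      ¬ ∃ A B : Fin x → Matrix (Fin (2 * x)) (Fin 9) ℂ,
        ∀ z : Fin x → ℂ,
          (∑ i, (z i • A i + (starRingEnd ℂ) (z i) • B i))ᴴ *
            (∑ i, (z i • A i + (starRingEnd ℂ) (z i) • B i)) =
          (∑ i, (Complex.normSq (z i) : ℂ)) • (1 : Matrix (Fin 9) (Fin 9) ℂ) := by
  classical
  rintro ⟨A, B, hAB⟩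
  let Gm : Fin x ⊕ Fin x → Matrix (Fin (2*x)) (Fin 9) ℂ :=
    Sum.elim (fun i => A i + B i) (fun i => Complex.I • (A i - B i))
  let w : Fin 9 ⊕ Fin 9 → Fin 9 → ℂ :=
    Sum.elim (fun c => Pi.single c 1) (fun c => Pi.single c Complex.I)
  let β : Fin (2*x) ⊕ Fin (2*x) → Fin x ⊕ Fin x → Fin 9 ⊕ Fin 9 → ℝ :=
    Sum.elim (fun p i j => ((Gm i *ᵥ w j) p).re) (fun p i j => ((Gm i *ᵥ w j) p).im)
  apply hopf_types a b ho (by simp; omega) (by simp; omega) (by simp; omega) β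
  intro r s
  let z : Fin x → ℂ := fun i => r (Sum.inl i) + r (Sum.inr i) * Complex.I
  let v : Fin 9 → ℂ := fun c => s (Sum.inl c) + s (Sum.inr c) * Complex.I
  have hz := hAB z
  set G := ∑ i, (z i • A i + (starRingEnd ℂ) (z i) • B i) with hGdef
  have hG : G = ∑ i, (r i : ℂ) • Gm i := by
    rw [Fintype.sum_sum_type, ← Finset.sum_add_distrib, hGdef]
    refine Finset.sum_congr rfl fun i _ => ?_
    have e1 : (starRingEnd ℂ) (z i) = r (Sum.inl i) - r (Sum.inr i) * Complex.I := by
      simp [z, sub_eq_add_neg]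
    rw [e1]
    ext p c
    simp only [Gm, z, Sum.elim_inl, Sum.elim_inr, Matrix.add_apply, Matrix.smul_apply, Matrix.sub_apply, smul_eq_mul]
    ring
  have hv : v = ∑ j, (s j : ℂ) • w j := by
    rw [Fintype.sum_sum_type, ← Finset.sum_add_distrib]
    ext c
    simp [w, v, Finset.sum_apply, Pi.single_apply, Finset.sum_add_distrib]
  have hGv : ∀ p, (G *ᵥ v) p = ∑ i, ∑ j, (r i : ℂ) * (s j : ℂ) * (Gm i *ᵥ w j) p := by
    intro p
    rw [hG, hv, Matrix.sum_mulVec, Finset.sum_apply]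
    refine Finset.sum_congr rfl fun i _ => ?_
    rw [Matrix.mulVec_sum, Finset.sum_apply]
    refine Finset.sum_congr rfl fun j _ => ?_
    rw [Matrix.smul_mulVec, Matrix.mulVec_smul]
    simp [mul_assoc]
  have hre : ∀ p, ∑ i, ∑ j, β (Sum.inl p) i j * r i * s j = ((G *ᵥ v) p).re := by
    intro p
    rw [hGv, Complex.re_sum]
    refine Finset.sum_congr rfl fun i _ => ?_
    rw [Complex.re_sum]
    refine Finset.sum_congr rfl fun j _ => ?_
    rw [← Complex.ofReal_mul, Complex.re_ofReal_mul]
    simp only [β, Sum.elim_inl]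
    ring
  have him : ∀ p, ∑ i, ∑ j, β (Sum.inr p) i j * r i * s j = ((G *ᵥ v) p).im := by
    intro p
    rw [hGv, Complex.im_sum]
    refine Finset.sum_congr rfl fun i _ => ?_
    rw [Complex.im_sum]
    refine Finset.sum_congr rfl fun j _ => ?_
    rw [← Complex.ofReal_mul, Complex.im_ofReal_mul]
    simp only [β, Sum.elim_inr]
    ring
  have hdot : ∀ {ι : Type} [Fintype ι] (y : ι → ℂ), star y ⬝ᵥ y = ((∑ p, Complex.normSq (y p) : ℝ) : ℂ) := by
    intro ι _ y
    simp only [dotProduct, Pi.star_apply, Complex.star_def, Complex.ofReal_sum, Complex.normSq_eq_conj_mul_self]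
  have hnorm : ∑ p, Complex.normSq ((G *ᵥ v) p) = (∑ i, Complex.normSq (z i)) * ∑ c, Complex.normSq (v c) := by
    have h1 := hdot (G *ᵥ v)
    rw [Matrix.star_mulVec, ← Matrix.dotProduct_mulVec, Matrix.mulVec_mulVec, hz, Matrix.smul_mulVec, Matrix.one_mulVec,
      dotProduct_smul, hdot] at h1
    apply Complex.ofReal_injective
    rw [← h1]
    simp
  simp only [Fintype.sum_sum_type] at hre him ⊢
  simp only [hre, him]
  rw [← Finset.sum_add_distrib, ← Finset.sum_add_distrib, ← Finset.sum_add_distrib]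
  have n1 : ∀ i, Complex.normSq (z i) = r (Sum.inl i)^2 + r (Sum.inr i)^2 := by
    intro i; simp [z, Complex.normSq_apply]; ring
  have n2 : ∀ i, Complex.normSq (v i) = s (Sum.inl i)^2 + s (Sum.inr i)^2 := by
    intro i; simp [v, Complex.normSq_apply]; ring
  simp only [n1, n2] at hnorm
  rw [← hnorm]
  refine Finset.sum_congr rfl fun p _ => ?_
  rw [Complex.normSq_apply]; ring

end

open Matrix

/-- the minimum decoding delay of a rate-1/2 COD (admitting arbitrary complex
linear combinations of the variables as entries) for 9 transmit antennas is 16: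
(a) a `[16, 9, 8]` complex design exists; (b) for `1 ≤ x ≤ 7` no `[2x, 9, x]` complex
design exists. -/
theorem stmt9 :
    (∃ A B : Fin 8 → Matrix (Fin 16) (Fin 9) ℂ,
      ∀ x : Fin 8 → ℂ,
        (∑ i, (x i • A i + (starRingEnd ℂ) (x i) • B i))ᴴ *
          (∑ i, (x i • A i + (starRingEnd ℂ) (x i) • B i)) =
        (∑ i, (Complex.normSq (x i) : ℂ)) • (1 : Matrix (Fin 9) (Fin 9) ℂ)) ∧
    (∀ x : ℕ, 1 ≤ x → x ≤ 7 →
      ¬ ∃ A B : Fin x → Matrix (Fin (2 * x)) (Fin 9) ℂ,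
        ∀ z : Fin x → ℂ,
          (∑ i, (z i • A i + (starRingEnd ℂ) (z i) • B i))ᴴ *
            (∑ i, (z i • A i + (starRingEnd ℂ) (z i) • B i)) =
          (∑ i, (Complex.normSq (z i) : ℂ)) • (1 : Matrix (Fin 9) (Fin 9) ℂ)) := by
  refine ⟨partA, ?_⟩
  intro x h1 h7
  interval_cases x
  · exact partB 1 0 4 (by norm_num) (by norm_num) (by norm_num) (by simp)
  · exact partB 2 0 8 (by norm_num) (by norm_num) (by norm_num) (by simp)
  · exact partB 3 0 12 (by norm_num) (by norm_num) (by norm_num) (by simp)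
  · exact partB 4 0 16 (by norm_num) (by norm_num) (by norm_num) (by simp)
  · exact partB 5 4 16 (by norm_num) (by norm_num) (by norm_num) (by norm_num [Nat.choose])
  · exact partB 6 8 16 (by norm_num) (by norm_num) (by norm_num) (by norm_num [Nat.choose])
  · exact partB 7 12 16 (by norm_num) (by norm_num) (by norm_num) (by norm_num [Nat.choose])
end
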